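/- Let ℓ ∈ {1, 2, 3} and let R ∈ ℤ[T] with deg(R) = 3. Then the number δ_ℓ(R(ξ)) := lim_{i→∞} {x_{ℓ+6i,0}·R(ξ)} (this limit exists) is transcendental over ℚ. Moreover there exist constants c₄, c₅ > 0 (depending only on ξ, the sequence (x_k), and R) such that the inequality |δ_ℓ(R(ξ)) − α| ≤ c₄·H(α)^(−γ−2) has infinitely many solutions α ∈ ℚ, while the inequality |δ_ℓ(R(ξ)) − α| ≤ c₅·H(α)^(−γ−2) has no solution α ∈ ℚ. -/

import Mathlib

open Polynomial Filter

noncomputable def gold : ℝ := (1 + Real.sqrt 5) / 2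

def Mmat (k : ℕ) : Matrix (Fin 2) (Fin 2) ℤ := !![3, (-1)^k; (-1)^(k+1), 0]

noncomputable def Xnorm (x : ℕ → Matrix (Fin 2) (Fin 2) ℤ) (k : ℕ) : ℝ :=
  max |(x k 0 0 : ℝ)| (max |(x k 0 1 : ℝ)| |(x k 1 1 : ℝ)|)

def MarkoffSeq (ξ : ℝ) (x : ℕ → Matrix (Fin 2) (Fin 2) ℤ) : Prop :=
  (∀ k, 1 ≤ k → x k 0 1 = x k 1 0) ∧
  (∀ k, 1 ≤ k → (x k).det = 1) ∧
  ∃ c₁ c₂ c₃ : ℝ, 0 < c₁ ∧ 0 < c₂ ∧ 0 < c₃ ∧ ∀ k, 1 ≤ k →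
    (c₁ * Xnorm x k ^ gold ≤ Xnorm x (k+1) ∧ Xnorm x (k+1) ≤ c₂ * Xnorm x k ^ gold) ∧
    (|(x k 0 0 : ℝ) * ξ - (x k 0 1 : ℝ)| ≤ c₃ / Xnorm x k ∧
     |(x k 0 1 : ℝ) * ξ - (x k 1 1 : ℝ)| ≤ c₃ / Xnorm x k) ∧
    (x (k+2) = x (k+1) * Mmat (k+1) * x k ∧ x (k+2) = x k * Mmat k * x (k+1)) ∧
    (Xnorm x k < Xnorm x (k+1) ∧ Xnorm x k < (1 + ξ^2) * |(x k 0 0 : ℝ)|)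

def polyNorm (P : Polynomial ℤ) : ℕ := P.support.sup fun i => (P.coeff i).natAbs

noncomputable def distInt (η : ℝ) : ℝ := |η - round η|

noncomputable def ratHeight (α : ℚ) : ℝ := max |(α.num : ℝ)| (α.den : ℝ)

def IsMinIntPoly (α : ℂ) (P : Polynomial ℤ) : Prop :=
  P ≠ 0 ∧ Polynomial.aeval α P = 0 ∧ P.content = 1 ∧ 0 < P.leadingCoeff ∧
  ∀ Q : Polynomial ℤ, Q ≠ 0 → Polynomial.aeval α Q = 0 → P.degree ≤ Q.degree

noncomputable def Qpoly (x : ℕ → Matrix (Fin 2) (Fin 2) ℤ) (k : ℕ) : Polynomial ℤ :=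
  Polynomial.C (x k 0 1 * x (k+1) 1 1 - x k 1 1 * x (k+1) 0 1)
  - Polynomial.C (x k 0 0 * x (k+1) 1 1 - x k 1 1 * x (k+1) 0 0) * Polynomial.X
  + Polynomial.C (x k 0 0 * x (k+1) 0 1 - x k 0 1 * x (k+1) 0 0) * Polynomial.X ^ 2

/-! Write `u k`, `v k`, `w k` for the entries of `x k`. The matrix recurrence makes `u` a sequence
of Markoff numbers, and modulo integers `δ` is, up to sign, `p / u n + f n` for integers `p`
depending on `n` and the rapidly convergent sum `f n = a * ∑ u (m + 1) / (u m * u (m + 3))` over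
`m = n, n + 3, n + 6, …`. As `f n ≍ |u n| ^ (-γ - 2)`, the fractions `p / u n` give both
approximation properties, except that `p / u n` need not be reduced; but consecutive Markoff numbers
are nearly coprime, which bounds the cancellation.

For transcendence, `f n` has an asymptotic expansion as a power series in `1 / u n` and
`1 / u (n + 1)`. Since `γ` is irrational, distinct monomials in these two quantities have distinct
orders of magnitude, so that quotients of integer sequences with such expansions form a field `K` of
germs. If `f` were algebraic over `K`, then, since `f (n + 3) - f n` lies in `K`, it would differ
from an element of `K` by a constant; the limit of that element along the progression is rational,
contradicting the irrationality of `δ`. Thus `f` is transcendental over `K`. By linear algebra there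
is a nonzero polynomial of degree at most `N` in each of three variables whose value at `1 / u n`,
`1 / u (n + 1)`, `f n` is smaller than a power of `1 / u n` growing like `N ^ (3 / 2)`, and by
transcendence this value is nonzero for arbitrarily large `n`. For algebraic `δ` this contradicts
Liouville's inequality, whose exponent grows only linearly in `N`. -/

open Asymptotics Topology

section DifferenceAlgebra

theorem taylor_coeff_of_natDegree_le_succ {A : Type*} [CommRing A] {Q : A[X]} {m : ℕ}
    (hQ : Q.natDegree ≤ m + 1) (r : A) :
    (taylor r Q).coeff m = Q.coeff m + (m + 1) * Q.coeff (m + 1) * r := by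
  have hlin : (hasseDeriv m Q).natDegree ≤ 1 :=
    (natDegree_hasseDeriv_le Q m).trans (Nat.sub_le_iff_le_add'.2 hQ)
  rw [taylor_coeff, eq_X_add_C_of_natDegree_le_one hlin]
  simp only [hasseDeriv_coeff, eval_add, eval_mul, eval_C, eval_X, zero_add, Nat.choose_self,
    add_comm 1 m, Nat.choose_succ_self_right]
  push_cast
  ring

/- The minimal polynomial `P` of `f` agrees with `P^σ(X + g)`, which is monic of the same degree and
also kills `f`; comparing subleading coefficients yields the solution in `K`. -/
theorem exists_eq_add_of_isIntegral {K E : Type*} [Field K] [CharZero K] [CommRing E]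
    [Nontrivial E] [Algebra K E] {σ : K →+* K} {τ : E →+* E}
    (hστ : ∀ k, τ (algebraMap K E k) = algebraMap K E (σ k)) {f : E} {g : K}
    (hf : IsIntegral K f) (hτf : τ f = f + algebraMap K E g) :
    ∃ h : K, σ h = h + g := by
  set P := minpoly K f with hP
  have hmonic : P.Monic := minpoly.monic hf
  have hcomp : (algebraMap K E).comp σ = τ.comp (algebraMap K E) :=
    RingHom.ext fun k => (hστ k).symm
  have hroot : aeval f (taylor g (P.map σ)) = 0 := by
    have hτP : τ (aeval f P) = 0 := by rw [minpoly.aeval, map_zero]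
    rw [taylor_apply, aeval_comp, map_add, aeval_X, aeval_C, ← hτf, aeval_def, eval₂_map, hcomp,
      ← hom_eval₂, ← aeval_def, hτP]
  have hdeg : (taylor g (P.map σ)).degree = P.degree := by rw [degree_taylor, degree_map]
  have heq : taylor g (P.map σ) = P :=
    minpoly.unique_of_degree_le_degree_minpoly K f
      (by rw [Monic, leadingCoeff_taylor, leadingCoeff_map, hmonic, map_one]) hroot hdeg.le
  obtain ⟨m, hm⟩ := Nat.exists_eq_succ_of_ne_zero (minpoly.natDegree_pos hf).ne'
  have hlead : P.coeff (m + 1) = 1 := by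
    rw [← Nat.succ_eq_add_one, ← hm]; exact hmonic
  have hnext : σ (P.coeff m) + (m + 1) * g = P.coeff m := by
    have hle : (P.map σ).natDegree ≤ m + 1 := by rw [natDegree_map, hP, hm]
    have := taylor_coeff_of_natDegree_le_succ hle g
    rwa [heq, coeff_map, coeff_map, hlead, map_one, mul_one, eq_comm] at this
  have hm0 : (m : K) + 1 ≠ 0 := Nat.cast_add_one_ne_zero m
  refine ⟨-P.coeff m / (m + 1), ?_⟩
  rw [map_div₀, map_neg, map_add, map_natCast, map_one]
  field_simp
  linear_combination -hnext

end DifferenceAlgebra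

section StepSum

variable {E : Type*} [NormedAddCommGroup E] {g : ℕ → E} {k : ℕ}

/-- The sum of a sequence `g` along the arithmetic progression `n, n + k, n + 2 k, …`, as a
function of its starting point `n`. -/
noncomputable def stepSum (g : ℕ → E) (k n : ℕ) : E := ∑' j, g (n + k * j)

theorem tendsto_add_mul_atTop (n : ℕ) (hk : k ≠ 0) : Tendsto (fun j => n + k * j) atTop atTop :=
  tendsto_atTop_mono (fun _ => Nat.le_add_left _ _) <|
    tendsto_id.const_mul_atTop' (Nat.pos_of_ne_zero hk)

theorem eventually_norm_step_le (hg : (fun n => g (n + k)) =o[atTop] g) :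
    ∀ᶠ n in atTop, ∀ j, ‖g (n + k * j)‖ ≤ (1 / 2) ^ j * ‖g n‖ := by
  obtain ⟨N, hN⟩ := eventually_atTop.1 (hg.bound one_half_pos)
  filter_upwards [eventually_ge_atTop N] with n hn j
  induction j with
  | zero => simp
  | succ j ih =>
    calc ‖g (n + k * (j + 1))‖ = ‖g (n + k * j + k)‖ := by rw [Nat.mul_succ, add_assoc]
      _ ≤ 1 / 2 * ‖g (n + k * j)‖ := hN _ (hn.trans (Nat.le_add_right _ _))
      _ ≤ 1 / 2 * ((1 / 2) ^ j * ‖g n‖) := by gcongr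
      _ = (1 / 2) ^ (j + 1) * ‖g n‖ := by ring

theorem summable_step [CompleteSpace E] (hk : k ≠ 0) (hg : (fun n => g (n + k)) =o[atTop] g)
    (n : ℕ) : Summable fun j => g (n + k * j) :=
  summable_of_ratio_norm_eventually_le one_half_lt_one <| by
    simpa only [Nat.mul_succ, ← add_assoc] using
      (tendsto_add_mul_atTop n hk).eventually (hg.bound one_half_pos)

theorem stepSum_eq_add [CompleteSpace E] (hk : k ≠ 0) (hg : (fun n => g (n + k)) =o[atTop] g)
    (n : ℕ) : stepSum g k n = g n + stepSum g k (n + k) := by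
  have hshift (j : ℕ) : n + k * (j + 1) = n + k + k * j := by ring
  simp only [stepSum, (summable_step hk hg n).tsum_eq_zero_add, hshift, mul_zero, add_zero]

theorem stepSum_isBigO (hg : (fun n => g (n + k)) =o[atTop] g) : stepSum g k =O[atTop] g := by
  refine IsBigO.of_bound 2 ?_
  filter_upwards [eventually_norm_step_le hg] with n hn
  exact tsum_of_norm_bounded (hasSum_geometric_two.mul_right ‖g n‖) hn

theorem stepSum_isEquivalent [CompleteSpace E] (hk : k ≠ 0)
    (hg : (fun n => g (n + k)) =o[atTop] g) : stepSum g k ~[atTop] g := by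
  have htail : stepSum g k - g = fun n => stepSum g k (n + k) :=
    funext fun n => sub_eq_iff_eq_add'.2 (stepSum_eq_add hk hg n)
  rw [IsEquivalent, htail]
  exact ((stepSum_isBigO hg).comp_tendsto (tendsto_add_atTop_nat k)).trans_isLittleO hg

end StepSum

/-- A nonvanishing null sequence in which each term has the exact order of magnitude of the
`γ`-th power of its predecessor. -/
structure PowerDecay (γ : ℝ) (s : ℕ → ℝ) : Prop where
  ne_zero : ∀ n, s n ≠ 0
  tendsto_zero : Tendsto s atTop (𝓝 0)
  succ_isTheta : (fun n => s (n + 1)) =Θ[atTop] fun n => |s n| ^ γ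

/-- The Laurent monomial `sₙ ^ i * sₙ₊₁ ^ j` in two consecutive terms of a sequence. -/
noncomputable def pairMonomial (s : ℕ → ℝ) (i j : ℤ) (n : ℕ) : ℝ := s n ^ i * s (n + 1) ^ j

/-- Evaluation of a polynomial in two variables at pairs of consecutive terms of a sequence. -/
noncomputable def pairEval (s : ℕ → ℝ) : MvPolynomial (Fin 2) ℚ →ₐ[ℚ] (ℕ → ℝ) :=
  MvPolynomial.aeval ![s, fun n => s (n + 1)]

/-- `g` decays faster than every power of `s`. -/
def IsFlat (s g : ℕ → ℝ) : Prop := ∀ M : ℕ, g =O[atTop] fun n => s n ^ M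

/-- `g` is asymptotically equivalent to a nonzero rational multiple of a Laurent monomial in two
consecutive terms of `s`. -/
def HasLeadingTerm (s g : ℕ → ℝ) : Prop :=
  ∃ r : ℚ, r ≠ 0 ∧ ∃ i j : ℤ, g ~[atTop] fun n => r * pairMonomial s i j n

theorem eq_and_eq_of_add_irrational_mul_eq {γ : ℝ} (hγ : Irrational γ) {i j i' j' : ℤ}
    (h : i + γ * j = i' + γ * j') : i = i' ∧ j = j' := by
  have hj : j = j' := by
    by_contra hne
    have hne' : ((j - j' : ℤ) : ℝ) ≠ 0 := Int.cast_ne_zero.2 (sub_ne_zero.2 hne)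
    refine hγ ⟨((i' - i : ℤ) : ℚ) / (j - j' : ℤ), ?_⟩
    rw [Rat.cast_div, Rat.cast_intCast, Rat.cast_intCast, div_eq_iff hne']
    push_cast
    linear_combination -h
  subst hj
  exact ⟨by exact_mod_cast add_right_cancel h, rfl⟩

theorem pairEval_apply (s : ℕ → ℝ) (q : MvPolynomial (Fin 2) ℚ) (n : ℕ) :
    pairEval s q n = ∑ m ∈ q.support, ((q.coeff m : ℚ) : ℝ) * pairMonomial s (m 0) (m 1) n := by
  rw [pairEval, MvPolynomial.aeval_def, MvPolynomial.eval₂_eq']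
  simp [Finset.sum_apply, Fin.prod_univ_two, pairMonomial, Pi.algebraMap_apply]

namespace PowerDecay

variable {γ : ℝ} {s : ℕ → ℝ}

section Orders

theorem abs_pos (h : PowerDecay γ s) (n : ℕ) : 0 < |s n| := _root_.abs_pos.2 (h.ne_zero n)

theorem tendsto_abs (h : PowerDecay γ s) : Tendsto (fun n => |s n|) atTop (𝓝 0) :=
  (tendsto_zero_iff_abs_tendsto_zero _).1 h.tendsto_zero

theorem tendsto_rpow (h : PowerDecay γ s) {a : ℝ} (ha : 0 < a) :
    Tendsto (fun n => |s n| ^ a) atTop (𝓝 0) := by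
  simpa only [Real.zero_rpow ha.ne'] using h.tendsto_abs.rpow_const (p := a) (Or.inr ha.le)

theorem rpow_isLittleO (h : PowerDecay γ s) {a b : ℝ} (hab : a < b) :
    (fun n => |s n| ^ b) =o[atTop] fun n => |s n| ^ a := by
  refine isLittleO_of_tendsto (fun n hn => absurd hn (Real.rpow_pos_of_pos (h.abs_pos n) _).ne') ?_
  simpa only [Real.rpow_sub (h.abs_pos _)] using h.tendsto_rpow (sub_pos.2 hab)

theorem rpow_isBigO (h : PowerDecay γ s) {a b : ℝ} (hab : a ≤ b) :
    (fun n => |s n| ^ b) =O[atTop] fun n => |s n| ^ a := by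
  rcases hab.eq_or_lt with rfl | hab
  · exact isBigO_refl _ _
  · exact (h.rpow_isLittleO hab).isBigO

theorem add_isTheta (h : PowerDecay γ s) (k : ℕ) :
    (fun n => s (n + k)) =Θ[atTop] fun n => |s n| ^ γ ^ k := by
  have hnn (a : ℝ) : 0 ≤ᶠ[atTop] fun n => |s n| ^ a :=
    Eventually.of_forall fun n => Real.rpow_nonneg (abs_nonneg _) _
  induction k with
  | zero => simpa using (isTheta_refl s atTop).norm_right
  | succ k ih =>
    have hsucc : (fun n => s (n + k + 1)) =Θ[atTop] fun n => |s (n + k)| ^ γ :=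
      h.succ_isTheta.imp (·.comp_tendsto (tendsto_add_atTop_nat k))
        (·.comp_tendsto (tendsto_add_atTop_nat k))
    have hstep := hsucc.trans (ih.norm_left.rpow
      (Eventually.of_forall fun n => norm_nonneg (s (n + k))) (hnn _))
    refine hstep.trans_eventuallyEq (Eventually.of_forall fun n => ?_)
    simp only [← Real.rpow_mul (abs_nonneg _), pow_succ]

theorem pairMonomial_ne_zero (h : PowerDecay γ s) (i j : ℤ) (n : ℕ) : pairMonomial s i j n ≠ 0 :=
  mul_ne_zero (zpow_ne_zero _ (h.ne_zero _)) (zpow_ne_zero _ (h.ne_zero _))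

theorem pairMonomial_isTheta (h : PowerDecay γ s) (i j : ℤ) :
    pairMonomial s i j =Θ[atTop] fun n => |s n| ^ (i + γ * j) := by
  have habs := ((isTheta_refl s atTop).norm_right.zpow i).mul (h.succ_isTheta.zpow j)
  refine habs.trans_eventuallyEq (Eventually.of_forall fun n => ?_)
  simp only [Real.norm_eq_abs, Real.rpow_add (h.abs_pos n), Real.rpow_intCast,
    Real.rpow_mul (abs_nonneg _)]

theorem pow_isTheta (M : ℕ) : (fun n => s n ^ M) =Θ[atTop] fun n => |s n| ^ (M : ℝ) := by
  simpa using ((isTheta_refl s atTop).norm_right).pow M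

theorem pow_isBigO_one (h : PowerDecay γ s) (M : ℕ) :
    (fun n => s n ^ M) =O[atTop] fun _ => (1 : ℝ) :=
  (h.tendsto_zero.pow M).isBigO_one ℝ

theorem pairMonomial_isLittleO (h : PowerDecay γ s) {i j i' j' : ℤ}
    (hw : i + γ * j < i' + γ * j') : pairMonomial s i' j' =o[atTop] pairMonomial s i j :=
  ((h.pairMonomial_isTheta i' j').isBigO.trans_isLittleO (h.rpow_isLittleO hw)).trans_isTheta
    (h.pairMonomial_isTheta i j).symm

theorem pairMonomial_isBigO_pow (h : PowerDecay γ s) {i j : ℤ} {M : ℕ} (hw : M ≤ i + γ * j) :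
    pairMonomial s i j =O[atTop] fun n => s n ^ M :=
  ((h.pairMonomial_isTheta i j).isBigO.trans (h.rpow_isBigO hw)).trans_isTheta
    (pow_isTheta M).symm

theorem pow_isLittleO_pairMonomial (h : PowerDecay γ s) {i j : ℤ} {M : ℕ} (hw : i + γ * j < M) :
    (fun n => s n ^ M) =o[atTop] pairMonomial s i j :=
  ((pow_isTheta M).isBigO.trans_isLittleO (h.rpow_isLittleO hw)).trans_isTheta
    (h.pairMonomial_isTheta i j).symm

end Orders

section LeadingTerm

theorem pairMonomial_div (h : PowerDecay γ s) (i j i' j' : ℤ) :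
    pairMonomial s i j / pairMonomial s i' j' = pairMonomial s (i - i') (j - j') := by
  funext n
  simp only [Pi.div_apply, pairMonomial, zpow_sub₀ (h.ne_zero _), mul_div_mul_comm]

theorem hasLeadingTerm_pairMonomial (i j : ℤ) : HasLeadingTerm s (pairMonomial s i j) :=
  ⟨1, one_ne_zero, i, j, by simpa only [Rat.cast_one, one_mul] using IsEquivalent.refl⟩

theorem hasLeadingTerm_div (h : PowerDecay γ s) {f g : ℕ → ℝ} (hf : HasLeadingTerm s f)
    (hg : HasLeadingTerm s g) : HasLeadingTerm s (f / g) := by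
  obtain ⟨r, hr, i, j, hf⟩ := hf
  obtain ⟨r', hr', i', j', hg⟩ := hg
  refine ⟨r / r', div_ne_zero hr hr', i - i', j - j', (hf.div hg).congr_right ?_⟩
  refine Eventually.of_forall fun n => ?_
  simp only [← h.pairMonomial_div, Pi.div_apply, Rat.cast_div, mul_div_mul_comm]

theorem eventually_ne_zero (h : PowerDecay γ s) {g : ℕ → ℝ} (hg : HasLeadingTerm s g) :
    ∀ᶠ n in atTop, g n ≠ 0 := by
  obtain ⟨r, hr, i, j, hg⟩ := hg
  filter_upwards [hg.isBigO_symm.eq_zero_imp] with n hn hgn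
  exact mul_ne_zero (Rat.cast_ne_zero.2 hr) (h.pairMonomial_ne_zero i j n) (hn hgn)

theorem exists_rat_eq_of_tendsto (h : PowerDecay γ s) (hγ : Irrational γ) {g : ℕ → ℝ}
    (hg : HasLeadingTerm s g) {ν : ℕ → ℕ} (hν : Tendsto ν atTop atTop) {L : ℝ}
    (hL : Tendsto (g ∘ ν) atTop (𝓝 L)) : ∃ r : ℚ, (r : ℝ) = L := by
  obtain ⟨r, hr, i, j, hg⟩ := hg
  have hr' : (r : ℝ) ≠ 0 := Rat.cast_ne_zero.2 hr
  have hmono : Tendsto (fun k => r * pairMonomial s i j (ν k)) atTop (𝓝 L) :=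
    (hg.comp_tendsto hν).tendsto_nhds hL
  have hone : pairMonomial s 0 0 = fun _ => 1 := by
    funext n
    simp only [pairMonomial, zpow_zero, mul_one]
  rcases lt_trichotomy (i + γ * j) 0 with hw | hw | hw
  · exfalso
    have hsmall : (fun _ => (1 : ℝ)) =o[atTop] pairMonomial s i j := by
      rw [← hone]
      exact h.pairMonomial_isLittleO (by simpa using hw)
    have hbdd := (isBigO_const_mul_left_iff hr').1 (hmono.isBigO_one ℝ)
    exact one_ne_zero (isLittleO_const_const_iff.1 ((hsmall.comp_tendsto hν).trans_isBigO hbdd))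
  · obtain ⟨rfl, rfl⟩ := eq_and_eq_of_add_irrational_mul_eq hγ (i' := 0) (j' := 0) (by simpa)
    refine ⟨r, tendsto_nhds_unique ?_ hmono⟩
    simp only [hone, mul_one]
    exact tendsto_const_nhds
  · have hzero : Tendsto (pairMonomial s i j) atTop (𝓝 0) := by
      rw [← isLittleO_one_iff ℝ, ← hone]
      exact h.pairMonomial_isLittleO (by simpa using hw)
    exact ⟨0, tendsto_nhds_unique (by simpa using (hzero.comp hν).const_mul (r : ℝ)) hmono⟩

theorem exists_pairEval_isEquivalent (h : PowerDecay γ s) (hγ : Irrational γ)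
    {q : MvPolynomial (Fin 2) ℚ} (hq : q ≠ 0) :
    ∃ m ∈ q.support,
      pairEval s q ~[atTop] fun n => ((q.coeff m : ℚ) : ℝ) * pairMonomial s (m 0) (m 1) n := by
  obtain ⟨m, hm, hmin⟩ := Finset.exists_min_image q.support
    (fun m => (m 0 : ℝ) + γ * (m 1 : ℝ)) (MvPolynomial.support_nonempty.2 hq)
  have hm0 : ((q.coeff m : ℚ) : ℝ) ≠ 0 := Rat.cast_ne_zero.2 (MvPolynomial.mem_support_iff.1 hm)
  have hsplit : pairEval s q = (fun n => ((q.coeff m : ℚ) : ℝ) * pairMonomial s (m 0) (m 1) n)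
      + fun n => ∑ k ∈ q.support.erase m, ((q.coeff k : ℚ) : ℝ) * pairMonomial s (k 0) (k 1) n :=
    funext fun n => (pairEval_apply s q n).trans (Finset.add_sum_erase _
      (fun k => ((q.coeff k : ℚ) : ℝ) * pairMonomial s (k 0) (k 1) n) hm).symm
  refine ⟨m, hm, hsplit ▸ IsEquivalent.refl.add_isLittleO ?_⟩
  refine IsLittleO.fun_sum fun k hk => ((isLittleO_const_mul_right_iff hm0).2 ?_).const_mul_left _
  obtain ⟨hkm, hk⟩ := Finset.mem_erase.1 hk
  have hle : ((m 0 : ℤ) : ℝ) + γ * (m 1 : ℤ) ≤ (k 0 : ℤ) + γ * (k 1 : ℤ) := mod_cast hmin k hk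
  refine h.pairMonomial_isLittleO (hle.lt_of_ne fun hw => hkm ?_)
  obtain ⟨h0, h1⟩ := eq_and_eq_of_add_irrational_mul_eq hγ hw
  exact Finsupp.ext (Fin.forall_fin_two.2 ⟨mod_cast h0.symm, mod_cast h1.symm⟩)

end LeadingTerm

section Expansions

theorem pairEval_bounded (h : PowerDecay γ s) (q : MvPolynomial (Fin 2) ℚ) :
    pairEval s q =O[atTop] fun _ => (1 : ℝ) := by
  refine (IsBigO.fun_sum (s := q.support) fun m _ => ?_).congr_left fun n =>
    (pairEval_apply s q n).symm
  have hsucc := h.tendsto_zero.comp (tendsto_add_atTop_nat 1)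
  simp only [pairMonomial, zpow_natCast]
  exact (((h.tendsto_zero.pow (m 0)).mul (hsucc.pow (m 1))).isBigO_one ℝ).const_mul_left _

/-- The algebra of real sequences admitting an asymptotic expansion as a power series in two
consecutive terms of `s`. -/
noncomputable def expansions (h : PowerDecay γ s) : Subalgebra ℚ (ℕ → ℝ) where
  carrier := {g | ∀ M : ℕ, ∃ q, (g - pairEval s q) =O[atTop] fun n => s n ^ M}
  mul_mem' := by
    intro f g hf hg M
    obtain ⟨p, hp⟩ := hf M
    obtain ⟨q, hq⟩ := hg M
    have hgbdd : g =O[atTop] fun _ => (1 : ℝ) :=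
      ((hq.trans (h.pow_isBigO_one M)).add (h.pairEval_bounded q)).congr_left fun n =>
        sub_add_cancel (g n) _
    have hsplit : f * g - pairEval s (p * q)
        = (f - pairEval s p) * g + pairEval s p * (g - pairEval s q) := by
      rw [map_mul]
      ring
    refine ⟨p * q, hsplit ▸ IsBigO.add ?_ ?_⟩
    · exact (hp.mul hgbdd).congr_right fun n => mul_one _
    · exact ((h.pairEval_bounded p).mul hq).congr_right fun n => one_mul _
  add_mem' := by
    intro f g hf hg M
    obtain ⟨p, hp⟩ := hf M
    obtain ⟨q, hq⟩ := hg M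
    refine ⟨p + q, ?_⟩
    rw [map_add, add_sub_add_comm]
    exact hp.add hq
  algebraMap_mem' r M := ⟨algebraMap ℚ _ r, by
    rw [AlgHom.commutes, sub_self]
    exact isBigO_zero _ _⟩

theorem pairEval_mem (h : PowerDecay γ s) (q : MvPolynomial (Fin 2) ℚ) :
    pairEval s q ∈ h.expansions := fun M => ⟨q, by rw [sub_self]; exact isBigO_zero _ _⟩

theorem self_mem (h : PowerDecay γ s) : s ∈ h.expansions := by
  simpa [pairEval] using h.pairEval_mem (MvPolynomial.X 0)

theorem succ_mem (h : PowerDecay γ s) : (fun n => s (n + 1)) ∈ h.expansions := by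
  simpa [pairEval] using h.pairEval_mem (MvPolynomial.X 1)

theorem bounded_of_mem (h : PowerDecay γ s) {g : ℕ → ℝ} (hg : g ∈ h.expansions) :
    g =O[atTop] fun _ => (1 : ℝ) := by
  obtain ⟨q, hq⟩ := hg 0
  exact ((hq.trans (h.pow_isBigO_one 0)).add (h.pairEval_bounded q)).congr_left fun n =>
    sub_add_cancel (g n) _

theorem mem_expansions_of_approx (h : PowerDecay γ s) {g : ℕ → ℝ}
    (hg : ∀ M : ℕ, ∃ e ∈ h.expansions, (g - e) =O[atTop] fun n => s n ^ M) :
    g ∈ h.expansions := by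
  intro M
  obtain ⟨e, he, hge⟩ := hg M
  obtain ⟨q, hq⟩ := he M
  exact ⟨q, (hge.add hq).congr_left fun n => sub_add_sub_cancel (g n) _ _⟩

theorem isFlat_or_hasLeadingTerm (h : PowerDecay γ s) (hγ : Irrational γ) {g : ℕ → ℝ}
    (hg : g ∈ h.expansions) : IsFlat s g ∨ HasLeadingTerm s g := by
  by_contra! hnot
  obtain ⟨hflat, hlead⟩ := hnot
  obtain ⟨M, hM⟩ := not_forall.1 hflat
  obtain ⟨q, hq⟩ := hg M
  have hsplit : g = pairEval s q + (g - pairEval s q) := (add_sub_cancel _ _).symm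
  rcases eq_or_ne q 0 with rfl | hq0
  · exact hM (by simpa using hq)
  obtain ⟨m, hm, hequiv⟩ := h.exists_pairEval_isEquivalent hγ hq0
  have hm0 : q.coeff m ≠ 0 := MvPolynomial.mem_support_iff.1 hm
  rcases le_or_gt (M : ℝ) ((m 0 : ℤ) + γ * (m 1 : ℤ)) with hw | hw
  · refine hM (hsplit ▸ IsBigO.add ?_ hq)
    exact hequiv.isBigO.trans ((h.pairMonomial_isBigO_pow hw).const_mul_left _)
  · refine hlead ⟨q.coeff m, hm0, m 0, m 1, hsplit ▸ hequiv.add_isLittleO ?_⟩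
    exact hq.trans_isLittleO <|
      (isLittleO_const_mul_right_iff (Rat.cast_ne_zero.2 hm0)).2 (h.pow_isLittleO_pairMonomial hw)

end Expansions

section IntExpansions

/-- The ring of integer sequences which acquire an asymptotic expansion after multiplication by a
power of `sₙ * sₙ₊₁`. -/
noncomputable def intExpansions (h : PowerDecay γ s) : Subring (ℕ → ℤ) where
  carrier := {c | ∃ N : ℕ, (fun n => (c n : ℝ) * (s n * s (n + 1)) ^ N) ∈ h.expansions}
  mul_mem' := by
    rintro a b ⟨N, hN⟩ ⟨N', hN'⟩
    refine ⟨N + N', ?_⟩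
    convert mul_mem hN hN' using 1
    funext n
    simp only [Pi.mul_apply, Int.cast_mul]
    ring
  one_mem' := ⟨0, by
    convert one_mem h.expansions using 1
    funext n
    simp⟩
  add_mem' := by
    rintro a b ⟨N, hN⟩ ⟨N', hN'⟩
    have hprod := mul_mem h.self_mem h.succ_mem
    refine ⟨N + N', ?_⟩
    convert add_mem (mul_mem hN (pow_mem hprod N')) (mul_mem hN' (pow_mem hprod N)) using 1
    funext n
    simp only [Pi.mul_apply, Pi.add_apply, Pi.pow_apply, Int.cast_add]
    ring
  zero_mem' := ⟨0, by
    convert zero_mem h.expansions using 1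
    funext n
    simp⟩
  neg_mem' := by
    rintro a ⟨N, hN⟩
    refine ⟨N, ?_⟩
    convert neg_mem hN using 1
    funext n
    simp

theorem eventually_eq_zero_or_hasLeadingTerm (h : PowerDecay γ s) (hγ : Irrational γ)
    {c : ℕ → ℤ} (hc : c ∈ h.intExpansions) :
    (∀ᶠ n in atTop, c n = 0) ∨ HasLeadingTerm s fun n => (c n : ℝ) := by
  obtain ⟨N, hN⟩ := hc
  have hdiv : (fun n => (c n : ℝ)) =
      (fun n => (c n : ℝ) * (s n * s (n + 1)) ^ N) / pairMonomial s N N := by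
    funext n
    rw [Pi.div_apply, pairMonomial, zpow_natCast, zpow_natCast, ← mul_pow,
      mul_div_cancel_right₀ _ (pow_ne_zero _ (mul_ne_zero (h.ne_zero _) (h.ne_zero _)))]
  refine (h.isFlat_or_hasLeadingTerm hγ hN).imp (fun hflat => ?_) fun hlead =>
    hdiv ▸ h.hasLeadingTerm_div hlead (hasLeadingTerm_pairMonomial N N)
  obtain ⟨M, hM⟩ := exists_nat_gt ((N : ℤ) + γ * (N : ℤ))
  have hlim : Tendsto (fun n => (c n : ℝ)) atTop (𝓝 0) :=
    hdiv ▸ ((hflat M).trans_isLittleO (h.pow_isLittleO_pairMonomial hM)).tendsto_div_nhds_zero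
  have habs : Tendsto (fun n => |(c n : ℝ)|) atTop (𝓝 0) := by simpa only [abs_zero] using hlim.abs
  filter_upwards [habs.eventually_lt_const one_pos] with n hn
  exact Int.abs_lt_one_iff.1 (by exact_mod_cast hn)

end IntExpansions

end PowerDecay

section GermField

variable {ι 𝕜 : Type*} [Field 𝕜] {l : Filter ι} {R : Subring (ι → 𝕜)}

/-- The germs along `l` of the quotients of functions in `R`, with denominators that are eventually
nonzero. -/
def fractionGerms (l : Filter ι) (R : Subring (ι → 𝕜)) : Subring (l.Germ 𝕜) where
  carrier := {x | ∃ c ∈ R, ∃ d ∈ R, (∀ᶠ n in l, d n ≠ 0) ∧ x = ((c / d : ι → 𝕜) : l.Germ 𝕜)}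
  mul_mem' := by
    rintro _ _ ⟨c, hc, d, hd, hd0, rfl⟩ ⟨c', hc', d', hd', hd0', rfl⟩
    refine ⟨c * c', mul_mem hc hc', d * d', mul_mem hd hd', ?_, ?_⟩
    · filter_upwards [hd0, hd0'] with n h h' using mul_ne_zero h h'
    · rw [← Germ.coe_mul, div_mul_div_comm]
  one_mem' := ⟨1, one_mem R, 1, one_mem R, by simp, by rw [div_one]; rfl⟩
  add_mem' := by
    rintro _ _ ⟨c, hc, d, hd, hd0, rfl⟩ ⟨c', hc', d', hd', hd0', rfl⟩
    refine ⟨c * d' + d * c', add_mem (mul_mem hc hd') (mul_mem hd hc'), d * d', mul_mem hd hd',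
      ?_, Germ.coe_eq.2 ?_⟩
    · filter_upwards [hd0, hd0'] with n h h' using mul_ne_zero h h'
    · filter_upwards [hd0, hd0'] with n h h' using div_add_div _ _ h h'
  zero_mem' := ⟨0, zero_mem R, 1, one_mem R, by simp,
    Germ.coe_eq.2 (Eventually.of_forall fun _ => (zero_div _).symm)⟩
  neg_mem' := by
    rintro _ ⟨c, hc, d, hd, hd0, rfl⟩
    exact ⟨-c, neg_mem hc, d, hd, hd0, by rw [← Germ.coe_neg, neg_div]⟩

theorem coe_inv_mem_fractionGerms {d : ι → 𝕜} (hd : d ∈ R) (hd0 : ∀ᶠ n in l, d n ≠ 0) :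
    ((d⁻¹ : ι → 𝕜) : l.Germ 𝕜) ∈ fractionGerms l R :=
  ⟨1, one_mem R, d, hd, hd0, by rw [one_div]⟩

theorem isField_fractionGerms [l.NeBot]
    (hR : ∀ c ∈ R, (∀ᶠ n in l, c n = 0) ∨ ∀ᶠ n in l, c n ≠ 0) : IsField (fractionGerms l R) where
  exists_pair_ne := ⟨0, 1, zero_ne_one⟩
  mul_comm := mul_comm
  mul_inv_cancel := by
    rintro ⟨_, c, hc, d, hd, hd0, rfl⟩ hne
    have hc0 : ∀ᶠ n in l, c n ≠ 0 := (hR c hc).resolve_left fun hc0 => hne <| Subtype.ext <|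
      Germ.coe_eq.2 <| hc0.mono fun n hn => (congrArg (· / d n) hn).trans (zero_div _)
    refine ⟨⟨_, d, hd, c, hc, hc0, rfl⟩, Subtype.ext (Germ.coe_eq.2 ?_)⟩
    filter_upwards [hc0, hd0] with n hcn hdn
    exact (div_mul_div_cancel₀ hdn).trans (div_self hcn)

/-- Composition with a self-map preserving the filter, as an endomorphism of the ring of germs. -/
def germComp {T : ι → ι} (hT : Tendsto T l l) : l.Germ 𝕜 →+* l.Germ 𝕜 where
  toFun x := x.compTendsto T hT
  map_one' := rfl
  map_mul' x y := Germ.inductionOn₂ x y fun _ _ => rfl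
  map_zero' := rfl
  map_add' x y := Germ.inductionOn₂ x y fun _ _ => rfl

theorem germComp_mem {T : ι → ι} (hT : Tendsto T l l) (hRT : ∀ c ∈ R, c ∘ T ∈ R) {x : l.Germ 𝕜}
    (hx : x ∈ fractionGerms l R) : germComp hT x ∈ fractionGerms l R := by
  obtain ⟨c, hc, d, hd, hd0, rfl⟩ := hx
  exact ⟨c ∘ T, hRT c hc, d ∘ T, hRT d hd, hT.eventually hd0, rfl⟩

theorem exists_fraction_sub_comp_eq [CharZero 𝕜] [l.NeBot]
    (hR : ∀ c ∈ R, (∀ᶠ n in l, c n = 0) ∨ ∀ᶠ n in l, c n ≠ 0) {T : ι → ι} (hT : Tendsto T l l)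
    (hRT : ∀ c ∈ R, c ∘ T ∈ R) {f : ι → 𝕜} (hf : IsAlgebraic (fractionGerms l R) (f : l.Germ 𝕜))
    (hfT : ((f ∘ T - f : ι → 𝕜) : l.Germ 𝕜) ∈ fractionGerms l R) :
    ∃ c ∈ R, ∃ d ∈ R, (∀ᶠ n in l, d n ≠ 0) ∧
      ∀ᶠ n in l, c (T n) / d (T n) - f (T n) = c n / d n - f n := by
  let _ : Field (fractionGerms l R) := (isField_fractionGerms hR).toField
  have : CharZero (fractionGerms l R) := charZero_of_inj_zero fun n hn => by
    have hn' : ((n : 𝕜) : l.Germ 𝕜) = ((0 : 𝕜) : l.Germ 𝕜) := congrArg Subtype.val hn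
    exact Nat.cast_eq_zero.1 (Germ.const_inj.1 hn')
  obtain ⟨⟨_, c, hc, d, hd, hd0, rfl⟩, hh⟩ := exists_eq_add_of_isIntegral
    (σ := (germComp hT).restrict _ _ fun x hx => germComp_mem hT hRT hx) (τ := germComp hT)
    (f := (f : l.Germ 𝕜)) (g := ⟨_, hfT⟩) (fun _ => rfl) (isAlgebraic_iff_isIntegral.1 hf)
    (Germ.coe_eq.2 (Eventually.of_forall fun n => (add_sub_cancel (f n) (f (T n))).symm))
  refine ⟨c, hc, d, hd, hd0, ?_⟩
  filter_upwards [Germ.coe_eq.1 (congrArg Subtype.val hh)] with n hn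
  change c (T n) / d (T n) = c n / d n + (f (T n) - f n) at hn
  linear_combination hn

end GermField

namespace PowerDecay

variable {γ : ℝ} {s : ℕ → ℝ}

section Shift

theorem pow_isBigO_pow (h : PowerDecay γ s) {M N : ℕ} (hMN : M ≤ N) :
    (fun n => s n ^ N) =O[atTop] fun n => s n ^ M :=
  ((pow_isTheta N).isBigO.trans (h.rpow_isBigO (Nat.cast_le.2 hMN))).trans_isTheta
    (pow_isTheta M).symm

theorem succ_isBigO (h : PowerDecay γ s) (hγ : 1 ≤ γ) :
    (fun n => s (n + 1)) =O[atTop] s := by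
  have hrpow := h.succ_isTheta.isBigO.trans (h.rpow_isBigO hγ)
  simp only [Real.rpow_one] at hrpow
  exact hrpow.trans (isBigO_refl s atTop).norm_left

theorem comp_add_isLittleO (h : PowerDecay γ s) (hγ : 1 < γ) {k : ℕ} (hk : k ≠ 0) {a : ℝ}
    (ha : 0 < a) {g : ℕ → ℝ} (hg : g =Θ[atTop] fun n => |s n| ^ a) :
    (fun n => g (n + k)) =o[atTop] g := by
  have hshift : (fun n => g (n + k)) =O[atTop] fun n => |s (n + k)| ^ a :=
    hg.isBigO.comp_tendsto (tendsto_add_atTop_nat k)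
  have hpow : (fun n => |s (n + k)| ^ a) =O[atTop] fun n => |s n| ^ (γ ^ k * a) := by
    refine ((h.add_isTheta k).isBigO.norm_left.rpow ha.le
      (Eventually.of_forall fun n => Real.rpow_nonneg (abs_nonneg _) _)).congr_right fun n => ?_
    rw [← Real.rpow_mul (abs_nonneg _)]
  have hlt : a < γ ^ k * a := (lt_mul_iff_one_lt_left ha).2 (one_lt_pow₀ hγ hk)
  exact ((hshift.trans hpow).trans_isLittleO (h.rpow_isLittleO hlt)).trans_isTheta hg.symm

theorem comp_succ_mem (h : PowerDecay γ s) (hγ : 1 ≤ γ)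
    (hs : (fun n => s (n + 2)) ∈ h.expansions) {g : ℕ → ℝ} (hg : g ∈ h.expansions) :
    (fun n => g (n + 1)) ∈ h.expansions := by
  have hpoly (q : MvPolynomial (Fin 2) ℚ) : (fun n => pairEval s q (n + 1)) ∈ h.expansions := by
    induction q using MvPolynomial.induction_on with
    | C r =>
      rw [pairEval, MvPolynomial.aeval_C]
      exact algebraMap_mem h.expansions r
    | add p q hp hq =>
      rw [map_add]
      exact add_mem hp hq
    | mul_X p i hp =>
      have hX : (fun n => pairEval s (MvPolynomial.X i) (n + 1)) ∈ h.expansions := by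
        fin_cases i
        · simpa [pairEval] using h.succ_mem
        · simpa [pairEval] using hs
      rw [map_mul]
      exact mul_mem hp hX
  refine h.mem_expansions_of_approx fun M => ?_
  obtain ⟨q, hq⟩ := hg M
  exact ⟨_, hpoly q,
    (hq.comp_tendsto (tendsto_add_atTop_nat 1)).trans ((h.succ_isBigO hγ).pow M)⟩

/- Each use of the recurrence turns an approximation of order `M` at `n + k` into one of order
`2 * M` at `n`. -/
theorem mem_expansions_of_recurrence (h : PowerDecay γ s) {k : ℕ}
    (hk : ∀ g ∈ h.expansions, (fun n => g (n + k)) ∈ h.expansions)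
    (hs : (fun n => s (n + k)) =O[atTop] fun n => s n ^ 2) {f g : ℕ → ℝ}
    (hg : g ∈ h.expansions) (hf : ∀ n, f n = g n + f (n + k)) (hfs : f =O[atTop] s) :
    f ∈ h.expansions := by
  have happrox (M : ℕ) : ∃ e ∈ h.expansions, (f - e) =O[atTop] fun n => s n ^ (M + 1) := by
    induction M with
    | zero => exact ⟨0, zero_mem _, by simpa using hfs⟩
    | succ M ih =>
      obtain ⟨e, he, hM⟩ := ih
      refine ⟨g + fun n => e (n + k), add_mem hg (hk e he), ?_⟩
      have hsq : (fun n => (s n ^ 2) ^ (M + 1)) =O[atTop] fun n => s n ^ (M + 1 + 1) := by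
        simpa only [← pow_mul] using h.pow_isBigO_pow (by lia : M + 1 + 1 ≤ 2 * (M + 1))
      refine (((hM.comp_tendsto (tendsto_add_atTop_nat k)).trans (hs.pow _)).trans hsq).congr_left
        fun n => ?_
      simp only [Function.comp_apply, Pi.sub_apply, Pi.add_apply, hf n]
      ring
  refine h.mem_expansions_of_approx fun M => ?_
  obtain ⟨e, he, hM⟩ := happrox M
  exact ⟨e, he, hM.trans (h.pow_isBigO_pow (Nat.le_succ M))⟩

end Shift

end PowerDecay

theorem gold_sq : gold ^ 2 = gold + 1 := Real.goldenRatio_sq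

theorem one_lt_gold : 1 < gold := Real.one_lt_goldenRatio

theorem gold_irrational : Irrational gold := Real.goldenRatio_irrational

/-- The termwise inverse of an integer sequence. -/
noncomputable def invSeq (u : ℕ → ℤ) (n : ℕ) : ℝ := (u n : ℝ)⁻¹

/-- An integer sequence whose consecutive triples solve the Markoff equation and whose terms grow
like iterated powers with the golden ratio as exponent. -/
structure MarkoffGrowth (u : ℕ → ℤ) : Prop where
  markoff : ∀ n, u n ^ 2 + u (n + 1) ^ 2 + u (n + 2) ^ 2 = 3 * u n * u (n + 1) * u (n + 2)
  powerDecay : PowerDecay gold (invSeq u)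

/-- The bounded quotient `uₙ * uₙ₊₁ / uₙ₊₂`, which expresses the sequence of inverses by a
two-step recurrence. -/
noncomputable def ratioSeq (u : ℕ → ℤ) (n : ℕ) : ℝ := u n * u (n + 1) / u (n + 2)

/-- The increment `uₙ₊₁ / (uₙ * uₙ₊₃)` between approximations with denominators `uₙ` and `uₙ₊₃`. -/
noncomputable def gapSeq (u : ℕ → ℤ) (n : ℕ) : ℝ := u (n + 1) / (u n * u (n + 3))

/-- The sum of `a` times the increments `gapSeq u` along `n, n + 3, n + 6, …`. -/
noncomputable def gapSum (u : ℕ → ℤ) (a : ℤ) (n : ℕ) : ℝ := a * stepSum (gapSeq u) 3 n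

namespace MarkoffGrowth

variable {u : ℕ → ℤ}

theorem cast_ne_zero (h : MarkoffGrowth u) (n : ℕ) : (u n : ℝ) ≠ 0 :=
  fun h0 => h.powerDecay.ne_zero n (by rw [invSeq, h0, inv_zero])

theorem cast_markoff (h : MarkoffGrowth u) (n : ℕ) :
    (u n : ℝ) ^ 2 + u (n + 1) ^ 2 + u (n + 2) ^ 2 = 3 * u n * u (n + 1) * u (n + 2) :=
  mod_cast h.markoff n

section Expansions

theorem ratioSeq_eq (h : MarkoffGrowth u) (n : ℕ) : ratioSeq u n =
    3⁻¹ * (1 + ratioSeq u n ^ 2 * (invSeq u n ^ 2 + invSeq u (n + 1) ^ 2)) := by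
  have h0 := h.cast_ne_zero n
  have h1 := h.cast_ne_zero (n + 1)
  have h2 := h.cast_ne_zero (n + 2)
  unfold ratioSeq invSeq
  field_simp
  linear_combination -h.cast_markoff n

theorem ratioSeq_bounded (h : MarkoffGrowth u) : ratioSeq u =O[atTop] fun _ => (1 : ℝ) := by
  have hd := h.powerDecay
  have hratio : ratioSeq u = fun n => invSeq u (n + 2) * pairMonomial (invSeq u) (-1) (-1) n := by
    funext n
    simp only [ratioSeq, invSeq, pairMonomial, zpow_neg_one, inv_inv]
    ring
  have hO := ((hd.add_isTheta 2).mul (hd.pairMonomial_isTheta (-1) (-1))).isBigO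
  simp only [← hratio] at hO
  refine hO.congr_right fun n => ?_
  rw [← Real.rpow_add (hd.abs_pos n), gold_sq]
  norm_num

theorem sq_add_sq_mem (h : MarkoffGrowth u) :
    (fun n => invSeq u n ^ 2 + invSeq u (n + 1) ^ 2) ∈ h.powerDecay.expansions :=
  add_mem (pow_mem h.powerDecay.self_mem 2) (pow_mem h.powerDecay.succ_mem 2)

theorem sq_add_sq_isBigO (h : MarkoffGrowth u) :
    (fun n => invSeq u n ^ 2 + invSeq u (n + 1) ^ 2) =O[atTop] invSeq u := by
  have hsq : (fun n => invSeq u n ^ 2) =O[atTop] invSeq u := by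
    simpa using h.powerDecay.pow_isBigO_pow one_le_two
  exact hsq.add (((h.powerDecay.succ_isBigO one_lt_gold.le).pow 2).trans hsq)

/- By the Markoff equation `ratioSeq u` is a fixed point of
`r ↦ (1 + r ^ 2 * (sₙ ^ 2 + sₙ₊₁ ^ 2)) / 3`, which contracts distances by a factor `O(sₙ)`. -/
theorem ratioSeq_mem (h : MarkoffGrowth u) : ratioSeq u ∈ h.powerDecay.expansions := by
  set w : ℕ → ℝ := fun n => invSeq u n ^ 2 + invSeq u (n + 1) ^ 2 with hw
  refine h.powerDecay.mem_expansions_of_approx fun M => ?_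
  induction M with
  | zero => exact ⟨0, zero_mem _, by simpa using h.ratioSeq_bounded⟩
  | succ M ih =>
    obtain ⟨e, he, hM⟩ := ih
    refine ⟨(3⁻¹ : ℚ) • (1 + e ^ 2 * w), Subalgebra.smul_mem _
      (add_mem (one_mem _) (mul_mem (pow_mem he 2) h.sq_add_sq_mem)) _, ?_⟩
    have hsum := h.ratioSeq_bounded.add (h.powerDecay.bounded_of_mem he)
    have hprod := ((hM.mul hsum).mul h.sq_add_sq_isBigO).const_mul_left (3⁻¹ : ℝ)
    refine (hprod.congr_left fun n => ?_).congr_right fun n => ?_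
    · simp only [Pi.sub_apply, Pi.smul_apply, Pi.add_apply, Pi.mul_apply, Pi.pow_apply,
        Pi.one_apply, Rat.smul_def, Rat.cast_inv, Rat.cast_ofNat, hw]
      linear_combination -h.ratioSeq_eq n
    · ring

theorem inv_add_two_eq (h : MarkoffGrowth u) :
    (fun n => invSeq u (n + 2)) = invSeq u * (fun n => invSeq u (n + 1)) * ratioSeq u := by
  funext n
  have h0 := h.cast_ne_zero n
  have h1 := h.cast_ne_zero (n + 1)
  simp only [Pi.mul_apply, invSeq, ratioSeq]
  field_simp

theorem inv_add_two_mem (h : MarkoffGrowth u) :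
    (fun n => invSeq u (n + 2)) ∈ h.powerDecay.expansions := by
  rw [h.inv_add_two_eq]
  exact mul_mem (mul_mem h.powerDecay.self_mem h.powerDecay.succ_mem) h.ratioSeq_mem

theorem comp_succ_mem (h : MarkoffGrowth u) {g : ℕ → ℝ} (hg : g ∈ h.powerDecay.expansions) :
    (fun n => g (n + 1)) ∈ h.powerDecay.expansions :=
  h.powerDecay.comp_succ_mem one_lt_gold.le h.inv_add_two_mem hg

theorem comp_add_three_mem (h : MarkoffGrowth u) {g : ℕ → ℝ} (hg : g ∈ h.powerDecay.expansions) :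
    (fun n => g (n + 3)) ∈ h.powerDecay.expansions :=
  h.comp_succ_mem (h.comp_succ_mem (h.comp_succ_mem hg))

theorem inv_add_two_isBigO (h : MarkoffGrowth u) :
    (fun n => invSeq u (n + 2)) =O[atTop] fun n => invSeq u n ^ 2 := by
  rw [h.inv_add_two_eq]
  have hsucc := h.powerDecay.succ_isBigO one_lt_gold.le
  exact (((isBigO_refl (invSeq u) atTop).mul hsucc).mul h.ratioSeq_bounded).congr_right
    fun n => by ring

theorem inv_add_three_isBigO (h : MarkoffGrowth u) :
    (fun n => invSeq u (n + 3)) =O[atTop] fun n => invSeq u n ^ 2 :=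
  (h.inv_add_two_isBigO.comp_tendsto (tendsto_add_atTop_nat 1)).trans
    ((h.powerDecay.succ_isBigO one_lt_gold.le).pow 2)

end Expansions

section GapSum

theorem gapSeq_mem (h : MarkoffGrowth u) : gapSeq u ∈ h.powerDecay.expansions := by
  have hgap : gapSeq u =
      invSeq u * (fun n => invSeq u (n + 2)) * fun n => ratioSeq u (n + 1) := by
    funext n
    have h2 := h.cast_ne_zero (n + 2)
    simp only [Pi.mul_apply, gapSeq, invSeq, ratioSeq]
    field_simp
  rw [hgap]
  exact mul_mem (mul_mem h.powerDecay.self_mem h.inv_add_two_mem) (h.comp_succ_mem h.ratioSeq_mem)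

theorem gapSeq_isTheta (h : MarkoffGrowth u) :
    gapSeq u =Θ[atTop] fun n => |invSeq u n| ^ (gold + 2) := by
  have hd := h.powerDecay
  have hgap : gapSeq u = fun n => invSeq u (n + 3) * pairMonomial (invSeq u) 1 (-1) n := by
    funext n
    simp only [gapSeq, invSeq, pairMonomial, zpow_one, zpow_neg_one, inv_inv]
    field_simp
  rw [hgap]
  refine ((hd.add_isTheta 3).mul (hd.pairMonomial_isTheta 1 (-1))).trans_eventuallyEq
    (Eventually.of_forall fun n => ?_)
  dsimp only
  rw [← Real.rpow_add (hd.abs_pos n)]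
  congr 1
  push_cast
  linear_combination (gold + 1) * gold_sq

theorem gapSeq_add_three_isLittleO (h : MarkoffGrowth u) :
    (fun n => gapSeq u (n + 3)) =o[atTop] gapSeq u :=
  h.powerDecay.comp_add_isLittleO one_lt_gold three_ne_zero
    (add_pos (one_pos.trans one_lt_gold) two_pos) h.gapSeq_isTheta

theorem gapSum_eq_add (h : MarkoffGrowth u) (a : ℤ) (n : ℕ) :
    gapSum u a n = a * gapSeq u n + gapSum u a (n + 3) := by
  rw [gapSum, stepSum_eq_add three_ne_zero h.gapSeq_add_three_isLittleO, mul_add, gapSum]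

theorem gapSum_isTheta (h : MarkoffGrowth u) {a : ℤ} (ha : a ≠ 0) :
    gapSum u a =Θ[atTop] fun n => |invSeq u n| ^ (gold + 2) :=
  ((isTheta_const_mul_left (Int.cast_ne_zero.2 ha)).2
    (stepSum_isEquivalent three_ne_zero h.gapSeq_add_three_isLittleO).isTheta).trans
    h.gapSeq_isTheta

theorem gapSum_isBigO (h : MarkoffGrowth u) (a : ℤ) :
    gapSum u a =O[atTop] fun n => |invSeq u n| ^ (gold + 2) :=
  ((stepSum_isBigO h.gapSeq_add_three_isLittleO).const_mul_left _).trans h.gapSeq_isTheta.isBigO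

theorem gapSum_mem (h : MarkoffGrowth u) (a : ℤ) : gapSum u a ∈ h.powerDecay.expansions := by
  have hle := h.powerDecay.rpow_isBigO (by linarith [one_lt_gold] : (1 : ℝ) ≤ gold + 2)
  have hO := (h.gapSum_isBigO a).trans hle
  simp only [Real.rpow_one] at hO
  exact h.powerDecay.mem_expansions_of_recurrence (fun g hg => h.comp_add_three_mem hg)
    h.inv_add_three_isBigO (mul_mem (intCast_mem _ a) h.gapSeq_mem) (h.gapSum_eq_add a)
    (hO.trans (isBigO_refl _ _).norm_left)

theorem tendsto_mul_gapSum (h : MarkoffGrowth u) (a : ℤ) :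
    Tendsto (fun n => u n * gapSum u a n) atTop (𝓝 0) := by
  have hu : (fun n => (u n : ℝ)) =Θ[atTop] fun n => |invSeq u n| ^ (-1 : ℝ) := by
    have hmono : pairMonomial (invSeq u) (-1) 0 = fun n => (u n : ℝ) := by
      funext n
      simp [pairMonomial, invSeq]
    simpa [hmono] using h.powerDecay.pairMonomial_isTheta (-1) 0
  refine ((hu.isBigO.mul (h.gapSum_isBigO a)).congr_right fun n =>
    (Real.rpow_add (h.powerDecay.abs_pos n) _ _).symm).trans_tendsto (h.powerDecay.tendsto_rpow ?_)
  linarith [one_lt_gold]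

theorem tendsto_gapSum (h : MarkoffGrowth u) (a : ℤ) : Tendsto (gapSum u a) atTop (𝓝 0) :=
  (h.gapSum_isBigO a).trans_tendsto
    (h.powerDecay.tendsto_rpow (add_pos (one_pos.trans one_lt_gold) two_pos))

theorem eventually_gapSum_ne_zero (h : MarkoffGrowth u) {a : ℤ} (ha : a ≠ 0) :
    ∀ᶠ n in atTop, gapSum u a n ≠ 0 := by
  filter_upwards [(h.gapSum_isTheta ha).isBigO_symm.eq_zero_imp] with n hn hzero
  exact (Real.rpow_pos_of_pos (h.powerDecay.abs_pos n) _).ne' (hn hzero)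

end GapSum

end MarkoffGrowth

/-- The filter of neighbourhoods of infinity in the arithmetic progression `n₀ + 3 * i`. -/
def progression (n₀ : ℕ) : Filter ℕ := map (fun i => n₀ + 3 * i) atTop

instance (n₀ : ℕ) : (progression n₀).NeBot := inferInstanceAs (map _ _).NeBot

theorem progression_le_atTop (n₀ : ℕ) : progression n₀ ≤ atTop :=
  tendsto_add_mul_atTop n₀ three_ne_zero

theorem eventually_progression {n₀ : ℕ} {p : ℕ → Prop} :
    (∀ᶠ n in progression n₀, p n) ↔ ∀ᶠ i in atTop, p (n₀ + 3 * i) := Iff.rfl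

theorem tendsto_add_three_progression (n₀ : ℕ) :
    Tendsto (· + 3) (progression n₀) (progression n₀) :=
  tendsto_map'_iff.2 ((tendsto_map (f := fun i => n₀ + 3 * i)).comp (tendsto_add_atTop_nat 1))

theorem exists_eventually_eq_of_add_three {α : Type*} {n₀ : ℕ} {g : ℕ → α}
    (hg : ∀ᶠ n in progression n₀, g (n + 3) = g n) : ∃ L, ∀ᶠ n in progression n₀, g n = L := by
  obtain ⟨i₀, hi₀⟩ := eventually_atTop.1 (eventually_progression.1 hg)
  refine ⟨g (n₀ + 3 * i₀), eventually_progression.2 (eventually_atTop.2 ⟨i₀, fun i hi => ?_⟩)⟩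
  induction i, hi using Nat.le_induction with
  | base => rfl
  | succ i hi ih => exact (hi₀ i hi).trans ih

namespace MarkoffGrowth

variable {u : ℕ → ℤ}

section IntExpansions

theorem self_mem (h : MarkoffGrowth u) : u ∈ h.powerDecay.intExpansions := by
  refine ⟨1, ?_⟩
  convert h.powerDecay.succ_mem using 1
  funext n
  simp [invSeq, h.cast_ne_zero n]

theorem inv_mul_inv_mul_add_two_mem (h : MarkoffGrowth u) :
    (fun n => invSeq u n * invSeq u (n + 1) * u (n + 2)) ∈ h.powerDecay.expansions := by
  convert sub_mem (natCast_mem _ 3) (mul_mem h.ratioSeq_mem h.sq_add_sq_mem) using 1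
  funext n
  have h0 := h.cast_ne_zero n
  have h1 := h.cast_ne_zero (n + 1)
  have h2 := h.cast_ne_zero (n + 2)
  simp only [Pi.sub_apply, Pi.mul_apply, Pi.natCast_apply, ratioSeq, invSeq]
  push_cast
  field_simp
  linear_combination h.cast_markoff n

theorem intExpansions_comp_succ (h : MarkoffGrowth u) {c : ℕ → ℤ}
    (hc : c ∈ h.powerDecay.intExpansions) : (fun n => c (n + 1)) ∈ h.powerDecay.intExpansions := by
  obtain ⟨N, hN⟩ := hc
  refine ⟨2 * N, ?_⟩
  convert mul_mem (h.comp_succ_mem hN)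
    (pow_mem (mul_mem h.powerDecay.self_mem h.inv_mul_inv_mul_add_two_mem) N) using 1
  funext n
  have h2 : invSeq u (n + 2) * u (n + 2) = 1 := inv_mul_cancel₀ (h.cast_ne_zero (n + 2))
  calc c (n + 1) * (invSeq u n * invSeq u (n + 1)) ^ (2 * N)
      = c (n + 1) * (invSeq u n * invSeq u (n + 1)) ^ (2 * N)
        * (invSeq u (n + 2) * u (n + 2)) ^ N := by rw [h2, one_pow, mul_one]
    _ = _ := by
      simp only [Pi.mul_apply, Pi.pow_apply]
      ring

theorem intExpansions_comp_add_three (h : MarkoffGrowth u) {c : ℕ → ℤ}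
    (hc : c ∈ h.powerDecay.intExpansions) : (fun n => c (n + 3)) ∈ h.powerDecay.intExpansions :=
  h.intExpansions_comp_succ (h.intExpansions_comp_succ (h.intExpansions_comp_succ hc))

end IntExpansions

section Transcendence

/-- The sequences of integers in `intExpansions`, regarded as sequences of real numbers. -/
noncomputable def realExpansions (h : MarkoffGrowth u) : Subring (ℕ → ℝ) :=
  h.powerDecay.intExpansions.map ((Int.castRingHom ℝ).compLeft ℕ)

/-- The field of germs, along the progression `n₀ + 3 * i`, of quotients of sequences in
`realExpansions`. -/
noncomputable abbrev fractions (h : MarkoffGrowth u) (n₀ : ℕ) :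
    Subring ((progression n₀).Germ ℝ) :=
  fractionGerms (progression n₀) h.realExpansions

theorem eventually_eq_zero_or_hasLeadingTerm (h : MarkoffGrowth u) {c : ℕ → ℝ}
    (hc : c ∈ h.realExpansions) : (∀ᶠ n in atTop, c n = 0) ∨ HasLeadingTerm (invSeq u) c := by
  obtain ⟨c, hc, rfl⟩ := hc
  exact (h.powerDecay.eventually_eq_zero_or_hasLeadingTerm gold_irrational hc).imp_left
    fun h0 => h0.mono fun n hn => Int.cast_eq_zero.2 hn

theorem eventually_eq_zero_or_ne_zero (h : MarkoffGrowth u) (n₀ : ℕ) {c : ℕ → ℝ}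
    (hc : c ∈ h.realExpansions) :
    (∀ᶠ n in progression n₀, c n = 0) ∨ ∀ᶠ n in progression n₀, c n ≠ 0 :=
  (h.eventually_eq_zero_or_hasLeadingTerm hc).imp (·.filter_mono (progression_le_atTop n₀))
    fun hlead => (h.powerDecay.eventually_ne_zero hlead).filter_mono (progression_le_atTop n₀)

theorem exists_rat_eq_of_tendsto_div (h : MarkoffGrowth u) {n₀ : ℕ} {c d : ℕ → ℝ}
    (hc : c ∈ h.realExpansions) (hd : d ∈ h.realExpansions)
    (hd0 : ∀ᶠ n in progression n₀, d n ≠ 0) {L : ℝ}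
    (hL : Tendsto (c / d) (progression n₀) (𝓝 L)) : ∃ r : ℚ, (r : ℝ) = L := by
  rcases h.eventually_eq_zero_or_hasLeadingTerm hc with hc0 | hc
  · have hzero : c / d =ᶠ[progression n₀] fun _ => 0 :=
      (hc0.filter_mono (progression_le_atTop n₀)).mono fun n hn => by simp [hn]
    exact ⟨0, by simpa using tendsto_nhds_unique (tendsto_const_nhds.congr' hzero.symm) hL⟩
  · rcases h.eventually_eq_zero_or_hasLeadingTerm hd with hdz | hd
    · obtain ⟨n, hn, hn'⟩ := (hd0.and (hdz.filter_mono (progression_le_atTop n₀))).exists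
      exact absurd hn' hn
    · exact h.powerDecay.exists_rat_eq_of_tendsto gold_irrational
        (h.powerDecay.hasLeadingTerm_div hc hd) (tendsto_add_mul_atTop n₀ three_ne_zero)
        (tendsto_map'_iff.1 hL)

theorem exists_rat_of_mem_realExpansions (h : MarkoffGrowth u) {c : ℕ → ℝ}
    (hc : c ∈ h.realExpansions) (n : ℕ) : ∃ r : ℚ, (r : ℝ) = c n := by
  obtain ⟨c, -, rfl⟩ := hc
  exact ⟨c n, Rat.cast_intCast _⟩

theorem gapSeq_mem_fractions (h : MarkoffGrowth u) (n₀ : ℕ) :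
    ((gapSeq u : ℕ → ℝ) : (progression n₀).Germ ℝ) ∈ h.fractions n₀ := by
  refine ⟨fun n => (u (n + 1) : ℝ), ⟨_, h.intExpansions_comp_succ h.self_mem, rfl⟩,
    fun n => u n * u (n + 3), ⟨_, mul_mem h.self_mem (h.intExpansions_comp_add_three h.self_mem),
      ?_⟩, Eventually.of_forall fun n => mul_ne_zero (h.cast_ne_zero n) (h.cast_ne_zero _), rfl⟩
  funext n
  exact Int.cast_mul _ _

theorem transcendental_gapSum (h : MarkoffGrowth u) {n₀ : ℕ} {a : ℤ}
    (hirr : ∀ᶠ n in progression n₀, Irrational (gapSum u a n)) :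
    Transcendental (h.fractions n₀) ((gapSum u a : ℕ → ℝ) : (progression n₀).Germ ℝ) := by
  intro halg
  have hgap : ((gapSum u a ∘ (· + 3) - gapSum u a : ℕ → ℝ) : (progression n₀).Germ ℝ)
      ∈ h.fractions n₀ := by
    have hsub : gapSum u a ∘ (· + 3) - gapSum u a = (-a : ℤ) • gapSeq u := by
      funext n
      simp only [Pi.sub_apply, Function.comp_apply, Pi.smul_apply, zsmul_eq_mul]
      push_cast
      linear_combination -h.gapSum_eq_add a n
    rw [hsub]
    exact zsmul_mem (h.gapSeq_mem_fractions n₀) (-a)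
  have hshift : ∀ c ∈ h.realExpansions, c ∘ (· + 3) ∈ h.realExpansions := by
    rintro _ ⟨c, hc, rfl⟩
    exact ⟨_, h.intExpansions_comp_add_three hc, rfl⟩
  obtain ⟨c, hc, d, hd, hd0, hconst⟩ := exists_fraction_sub_comp_eq
    (fun c hc => h.eventually_eq_zero_or_ne_zero n₀ hc) (tendsto_add_three_progression n₀)
    hshift halg hgap
  obtain ⟨L, hL⟩ := exists_eventually_eq_of_add_three
    (g := fun n => c n / d n - gapSum u a n) hconst
  have hlim : Tendsto (c / d) (progression n₀) (𝓝 L) := by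
    have hsum := ((h.tendsto_gapSum a).mono_left (progression_le_atTop n₀)).const_add L
    rw [add_zero] at hsum
    exact hsum.congr' (hL.mono fun n hn => by rw [← hn, sub_add_cancel, Pi.div_apply])
  obtain ⟨r, rfl⟩ := h.exists_rat_eq_of_tendsto_div hc hd hd0 hlim
  obtain ⟨n, hn, hnirr⟩ := (hL.and hirr).exists
  obtain ⟨p, hp⟩ := h.exists_rat_of_mem_realExpansions hc n
  obtain ⟨q, hq⟩ := h.exists_rat_of_mem_realExpansions hd n
  exact hnirr ⟨p / q - r, by push_cast; rw [hp, hq, ← hn, sub_sub_cancel]⟩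

theorem pairEval_mem_fractions (h : MarkoffGrowth u) (n₀ : ℕ) (q : MvPolynomial (Fin 2) ℚ) :
    ((pairEval (invSeq u) q : ℕ → ℝ) : (progression n₀).Germ ℝ) ∈ h.fractions n₀ := by
  have hinv {c : ℕ → ℤ} (hc : c ∈ h.powerDecay.intExpansions) (hc0 : ∀ n, (c n : ℝ) ≠ 0) :
      (((fun n => (c n : ℝ))⁻¹ : ℕ → ℝ) : (progression n₀).Germ ℝ) ∈ h.fractions n₀ :=
    coe_inv_mem_fractionGerms ⟨c, hc, rfl⟩ (Eventually.of_forall hc0)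
  induction q using MvPolynomial.induction_on with
  | C r =>
    have hr : ((pairEval (invSeq u) (MvPolynomial.C r) : ℕ → ℝ) : (progression n₀).Germ ℝ) =
        (r.num : (progression n₀).Germ ℝ) * (((fun _ => ((r.den : ℤ) : ℝ))⁻¹ : ℕ → ℝ)) := by
      refine Germ.coe_eq.2 (Eventually.of_forall fun _ => ?_)
      simp [pairEval, Rat.cast_def r, div_eq_mul_inv]
    rw [hr]
    exact mul_mem (intCast_mem _ _) (hinv (natCast_mem _ r.den) (by simp))
  | add p q hp hq => simpa using add_mem hp hq
  | mul_X q i hq =>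
    rw [map_mul, Germ.coe_mul, pairEval, MvPolynomial.aeval_X]
    refine mul_mem hq ?_
    fin_cases i
    · exact hinv h.self_mem h.cast_ne_zero
    · exact hinv (h.intExpansions_comp_succ h.self_mem) fun n => h.cast_ne_zero (n + 1)

theorem pairEval_germ_eq_zero_iff (h : MarkoffGrowth u) {n₀ : ℕ} {q : MvPolynomial (Fin 2) ℚ} :
    ((pairEval (invSeq u) q : ℕ → ℝ) : (progression n₀).Germ ℝ) = 0 ↔ q = 0 := by
  refine ⟨fun hzero => ?_, fun hq => by rw [hq, map_zero, Germ.coe_zero]⟩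
  by_contra hq
  obtain ⟨m, hm, hequiv⟩ := h.powerDecay.exists_pairEval_isEquivalent gold_irrational hq
  have hne := (h.powerDecay.eventually_ne_zero
    ⟨_, MvPolynomial.mem_support_iff.1 hm, m 0, m 1, hequiv⟩).filter_mono
      (progression_le_atTop n₀)
  obtain ⟨n, hn, hn'⟩ := (hne.and (Germ.coe_eq.1 hzero)).exists
  exact hn hn'

theorem frequently_eval₂_ne_zero (h : MarkoffGrowth u) {n₀ : ℕ} {f : ℕ → ℝ}
    (hf : Transcendental (h.fractions n₀) (f : (progression n₀).Germ ℝ))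
    {A : (MvPolynomial (Fin 2) ℚ)[X]} (hA : A ≠ 0) :
    ∃ᶠ n in progression n₀, A.eval₂ (pairEval (invSeq u) : _ →+* (ℕ → ℝ)) f n ≠ 0 := by
  intro hzero
  set ψ : MvPolynomial (Fin 2) ℚ →+* (progression n₀).Germ ℝ :=
    (Germ.coeRingHom (progression n₀)).comp (pairEval (invSeq u) : _ →+* (ℕ → ℝ))
  set φ : MvPolynomial (Fin 2) ℚ →+* h.fractions n₀ :=
    ψ.codRestrict _ fun q => h.pairEval_mem_fractions n₀ q
  have hφ : Function.Injective φ := (injective_iff_map_eq_zero φ).2 fun q hq =>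
    h.pairEval_germ_eq_zero_iff.1 (congrArg Subtype.val hq)
  refine hf ⟨A.map φ, (Polynomial.map_ne_zero_iff hφ).2 hA, ?_⟩
  rw [aeval_def, eval₂_map]
  refine (hom_eval₂ A (pairEval (invSeq u) : _ →+* (ℕ → ℝ)) (Germ.coeRingHom (progression n₀))
    f).symm.trans (Germ.coe_eq.2 ?_)
  exact hzero.mono fun n hn => not_not.1 hn

end Transcendence

end MarkoffGrowth

section LinearAlgebra

theorem exists_int_ne_zero_map_eq_zero {ι κ : Type*} [Fintype ι] [Fintype κ]
    (hcard : Fintype.card κ < Fintype.card ι) (φ : (ι → ℚ) →ₗ[ℚ] (κ → ℚ)) :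
    ∃ c : ι → ℤ, c ≠ 0 ∧ φ (fun x => (c x : ℚ)) = 0 := by
  have hker : LinearMap.ker φ ≠ ⊥ := LinearMap.ker_ne_bot_of_finrank_lt (by simpa using hcard)
  obtain ⟨r, hr, hr0⟩ := (Submodule.ne_bot_iff _).1 hker
  obtain ⟨d, hd⟩ := IsLocalization.exist_integer_multiples_of_finite (nonZeroDivisors ℤ) r
  choose c hc using hd
  have hcr : (fun x => (c x : ℚ)) = (d : ℤ) • r := funext hc
  refine ⟨c, fun h0 => hr0 ?_, by rw [hcr, map_zsmul, LinearMap.mem_ker.1 hr, smul_zero]⟩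
  refine (smul_eq_zero.1 (hcr.symm.trans ?_)).resolve_left (nonZeroDivisors.coe_ne_zero d)
  simp [h0, Pi.zero_def]

end LinearAlgebra

section AuxiliaryPolynomial

/-- The exponent vector `(i, j)` of a monomial in two variables. -/
noncomputable def pairExp (i j : ℕ) : Fin 2 →₀ ℕ := Finsupp.single 0 i + Finsupp.single 1 j

theorem pairExp_zero (i j : ℕ) : pairExp i j 0 = i := by simp [pairExp]

theorem pairExp_one (i j : ℕ) : pairExp i j 1 = j := by simp [pairExp]

theorem pairExp_self (m : Fin 2 →₀ ℕ) : pairExp (m 0) (m 1) = m := by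
  ext i
  fin_cases i
  · exact pairExp_zero _ _
  · exact pairExp_one _ _

theorem pairExp_inj {i j i' j' : ℕ} : pairExp i j = pairExp i' j' ↔ i = i' ∧ j = j' := by
  refine ⟨fun h => ⟨?_, ?_⟩, fun h => by rw [h.1, h.2]⟩
  · simpa only [pairExp_zero] using DFunLike.congr_fun h 0
  · simpa only [pairExp_one] using DFunLike.congr_fun h 1

/-- The polynomial in three variables (two of them in the coefficients) with a prescribed cube of
coefficients. -/
noncomputable def auxPoly (L : ℕ) :
    (Fin L × Fin L × Fin L → ℚ) →ₗ[ℚ] (MvPolynomial (Fin 2) ℚ)[X] :=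
  Fintype.linearCombination ℚ fun x =>
    Polynomial.monomial x.2.2 (MvPolynomial.monomial (pairExp x.1 x.2.1) 1)

variable {L : ℕ}

theorem auxPoly_apply (r : Fin L × Fin L × Fin L → ℚ) : auxPoly L r =
    ∑ x, Polynomial.monomial x.2.2 (MvPolynomial.monomial (pairExp x.1 x.2.1) (r x)) := by
  simp [auxPoly, Fintype.linearCombination_apply, smul_monomial, MvPolynomial.smul_monomial]

theorem coeff_coeff_auxPoly (r : Fin L × Fin L × Fin L → ℚ) (x : Fin L × Fin L × Fin L) :
    ((auxPoly L r).coeff x.2.2).coeff (pairExp x.1 x.2.1) = r x := by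
  rw [auxPoly_apply, finsetSum_coeff, MvPolynomial.coeff_sum, Finset.sum_eq_single x]
  · rw [coeff_monomial, if_pos rfl, MvPolynomial.coeff_monomial, if_pos rfl]
  · intro y _ hyx
    rw [coeff_monomial]
    split_ifs with hk
    · rw [MvPolynomial.coeff_monomial, if_neg]
      rintro hij
      obtain ⟨hi, hj⟩ := pairExp_inj.1 hij
      exact hyx (Prod.ext (Fin.ext hi) (Prod.ext (Fin.ext hj) (Fin.ext hk)))
    · exact MvPolynomial.coeff_zero _
  · simp

theorem auxPoly_ne_zero {r : Fin L × Fin L × Fin L → ℚ} (hr : r ≠ 0) : auxPoly L r ≠ 0 := by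
  obtain ⟨x, hx⟩ := Function.ne_iff.1 hr
  intro h0
  refine hx ?_
  rw [← coeff_coeff_auxPoly r x, h0, Polynomial.coeff_zero, MvPolynomial.coeff_zero, Pi.zero_apply]

theorem exists_auxPoly_eval_support {M : ℕ} (hLM : M ^ 2 < L ^ 3) (q : MvPolynomial (Fin 2) ℚ) :
    ∃ c : Fin L × Fin L × Fin L → ℤ, c ≠ 0 ∧
      ∀ m ∈ ((auxPoly L fun x => (c x : ℚ)).eval q).support, M ≤ m 0 ∨ M ≤ m 1 := by
  let φ : (Fin L × Fin L × Fin L → ℚ) →ₗ[ℚ] (Fin M × Fin M → ℚ) := LinearMap.pi fun y =>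
    MvPolynomial.lcoeff ℚ (pairExp y.1 y.2) ∘ₗ (leval q).restrictScalars ℚ ∘ₗ auxPoly L
  have hcard : Fintype.card (Fin M × Fin M) < Fintype.card (Fin L × Fin L × Fin L) := by
    simp only [Fintype.card_prod, Fintype.card_fin]
    linarith
  obtain ⟨c, hc0, hc⟩ := exists_int_ne_zero_map_eq_zero hcard φ
  refine ⟨c, hc0, fun m hm => ?_⟩
  by_contra! hlt
  refine MvPolynomial.mem_support_iff.1 hm ?_
  rw [← pairExp_self m]
  exact congrFun hc (⟨m 0, hlt.1⟩, ⟨m 1, hlt.2⟩)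

theorem pairEval_monomial (s : ℕ → ℝ) (i j : ℕ) (r : ℚ) (n : ℕ) :
    pairEval s (MvPolynomial.monomial (pairExp i j) r) n = r * (s n ^ i * s (n + 1) ^ j) := by
  rw [pairEval, MvPolynomial.aeval_monomial, Finsupp.prod_fintype _ _ (by simp)]
  simp [Fin.prod_univ_two, pairExp_zero, pairExp_one]

theorem eval₂_auxPoly (s f : ℕ → ℝ) (r : Fin L × Fin L × Fin L → ℚ) (n : ℕ) :
    (auxPoly L r).eval₂ (pairEval s : _ →+* (ℕ → ℝ)) f n =
      ∑ x, (r x : ℝ) * (s n ^ (x.1 : ℕ) * s (n + 1) ^ (x.2.1 : ℕ)) * f n ^ (x.2.2 : ℕ) := by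
  rw [auxPoly_apply, eval₂_finsetSum, Finset.sum_apply]
  refine Finset.sum_congr rfl fun x _ => ?_
  rw [eval₂_monomial, Pi.mul_apply, Pi.pow_apply]
  exact congrArg (· * _) (pairEval_monomial s _ _ _ n)

namespace PowerDecay

variable {γ : ℝ} {s : ℕ → ℝ}

theorem pairEval_isBigO_pow (h : PowerDecay γ s) (hγ : 1 ≤ γ) {q : MvPolynomial (Fin 2) ℚ} {M : ℕ}
    (hq : ∀ m ∈ q.support, M ≤ m 0 ∨ M ≤ m 1) :
    pairEval s q =O[atTop] fun n => s n ^ M := by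
  refine (IsBigO.fun_sum (s := q.support) fun m hm => IsBigO.const_mul_left
    (h.pairMonomial_isBigO_pow ?_) _).congr_left fun n => (pairEval_apply s q n).symm
  rw [Int.cast_natCast, Int.cast_natCast]
  rcases hq m hm with hM | hM
  · exact (Nat.cast_le.2 hM).trans
      (le_add_of_nonneg_right (mul_nonneg (zero_le_one.trans hγ) (Nat.cast_nonneg _)))
  · exact (Nat.cast_le.2 hM).trans ((le_mul_of_one_le_left (Nat.cast_nonneg _) hγ).trans
      (le_add_of_nonneg_left (Nat.cast_nonneg _)))

theorem eval₂_sub_pairEval_eval_isBigO (h : PowerDecay γ s) {f : ℕ → ℝ} (hf : f ∈ h.expansions)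
    {q : MvPolynomial (Fin 2) ℚ} {M : ℕ} (hq : (f - pairEval s q) =O[atTop] fun n => s n ^ M)
    (A : (MvPolynomial (Fin 2) ℚ)[X]) :
    (A.eval₂ (pairEval s : _ →+* (ℕ → ℝ)) f - pairEval s (A.eval q))
      =O[atTop] fun n => s n ^ M := by
  let φ : MvPolynomial (Fin 2) ℚ →+* h.expansions :=
    (pairEval s : _ →+* (ℕ → ℝ)).codRestrict h.expansions h.pairEval_mem
  obtain ⟨g, hg⟩ := sub_dvd_eval_sub (⟨f, hf⟩ : h.expansions) (φ q) (A.map φ)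
  have hfac : A.eval₂ (pairEval s : _ →+* (ℕ → ℝ)) f - pairEval s (A.eval q) =
      (f - pairEval s q) * g := by
    have hval := congrArg h.expansions.val hg
    rw [eval_map, eval_map, eval₂_at_apply, map_sub, map_mul, map_sub] at hval
    exact (congrArg (· - _) (hom_eval₂ A φ h.expansions.val.toRingHom ⟨f, hf⟩).symm).trans hval
  rw [hfac]
  exact (hq.mul (h.bounded_of_mem g.2)).congr_right fun n => mul_one _

theorem exists_auxPoly_isBigO (h : PowerDecay γ s) (hγ : 1 ≤ γ) {f : ℕ → ℝ}
    (hf : f ∈ h.expansions) {M : ℕ} (hLM : M ^ 2 < L ^ 3) :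
    ∃ c : Fin L × Fin L × Fin L → ℤ, c ≠ 0 ∧
      (auxPoly L fun x => (c x : ℚ)).eval₂ (pairEval s : _ →+* (ℕ → ℝ)) f
        =O[atTop] fun n => s n ^ M := by
  obtain ⟨q, hq⟩ := hf M
  obtain ⟨c, hc0, hc⟩ := exists_auxPoly_eval_support hLM q
  refine ⟨c, hc0, ?_⟩
  exact ((h.eval₂_sub_pairEval_eval_isBigO hf hq _).add (h.pairEval_isBigO_pow hγ hc)).congr_left
    fun n => sub_add_cancel _ _

end PowerDecay

end AuxiliaryPolynomial

section LowerBound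

theorem isIntegral_pow_smul_aeval {A : Type*} [CommRing A] {g : A} {a : ℤ}
    (ha : IsIntegral ℤ (a • g)) {P : ℤ[X]} {N : ℕ} (hP : P.natDegree ≤ N) :
    IsIntegral ℤ (a ^ N • aeval g P) := by
  rw [aeval_eq_sum_range' (Nat.lt_succ_of_le hP), Finset.smul_sum]
  refine IsIntegral.sum _ fun j hj => ?_
  have hterm : a ^ N • P.coeff j • g ^ j = (a ^ (N - j) * P.coeff j) • (a • g) ^ j := by
    rw [_root_.smul_pow, smul_smul, smul_smul,
      ← Nat.sub_add_cancel (Nat.lt_succ_iff.1 (Finset.mem_range.1 hj)), pow_add,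
      Nat.add_sub_cancel]
    congr 1
    ring
  rw [hterm]
  exact (ha.pow j).smul _

theorem one_le_prod_norm_embeddings {K : Type*} [Field K] [NumberField K] {y : K} (hy : y ≠ 0)
    (hint : IsIntegral ℤ y) : 1 ≤ ∏ σ : K →ₐ[ℚ] ℂ, ‖σ y‖ := by
  obtain ⟨z, hz⟩ := IsIntegrallyClosed.isIntegral_iff.1 (Algebra.isIntegral_norm ℚ hint)
  have hz0 : z ≠ 0 := by
    rintro rfl
    rw [map_zero] at hz
    exact hy (Algebra.norm_eq_zero_iff.1 hz.symm)
  rw [← norm_prod, ← Algebra.norm_eq_prod_embeddings ℚ ℂ, ← hz, eq_intCast, eq_ratCast,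
    Rat.cast_intCast, Complex.norm_intCast]
  exact_mod_cast Int.one_le_abs hz0

theorem exists_one_le_prod_norm_aeval {K : Type*} [Field K] [NumberField K] (g : K) :
    ∃ a : ℤ, ∀ (N : ℕ) (P : ℤ[X]), P.natDegree ≤ N → aeval g P ≠ 0 →
      1 ≤ ∏ σ : K →ₐ[ℚ] ℂ, (|(a : ℝ)| ^ N * ‖aeval (σ g) P‖) := by
  have hgalg : IsAlgebraic ℤ g :=
    (IsFractionRing.isAlgebraic_iff ℤ ℚ K).2 (IsIntegral.of_finite ℚ g).isAlgebraic
  obtain ⟨a, ha0, ha⟩ := hgalg.exists_integral_multiple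
  refine ⟨a, fun N P hP hne => ?_⟩
  refine (one_le_prod_norm_embeddings (smul_ne_zero (pow_ne_zero N ha0) hne)
    (isIntegral_pow_smul_aeval ha hP)).trans_eq (Finset.prod_congr rfl fun σ _ => ?_)
  have hσ : σ (aeval g P) = aeval (σ g) P :=
    (aeval_algHom_apply (σ.restrictScalars ℤ) g P).symm
  rw [zsmul_eq_mul, map_mul, map_intCast, hσ, norm_mul, Complex.norm_intCast, Int.cast_pow,
    abs_pow]

open IntermediateField in
theorem exists_one_le_mul_aeval_mul_pow {θ : ℝ} (hθ : IsAlgebraic ℚ θ) :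
    ∃ (D : ℕ) (T : ℝ), ∀ N : ℕ, ∃ C : ℝ, ∀ P : ℤ[X], P.natDegree ≤ N → aeval θ P ≠ 0 →
      ∀ B : ℝ, (∀ z : ℂ, ‖z‖ ≤ T → ‖aeval z P‖ ≤ B) → 1 ≤ C * |aeval θ P| * B ^ D := by
  classical
  have : FiniteDimensional ℚ ℚ⟮θ⟯ := adjoin.finiteDimensional hθ.isIntegral
  have : NumberField ℚ⟮θ⟯ := ⟨⟩
  let g : ℚ⟮θ⟯ := AdjoinSimple.gen ℚ θ
  let ι : ℚ⟮θ⟯ →ₐ[ℚ] ℂ := (Complex.ofRealAm.restrictScalars ℚ).comp (ℚ⟮θ⟯.val)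
  obtain ⟨a, hprod⟩ := exists_one_le_prod_norm_aeval g
  let S := (Finset.univ : Finset (ℚ⟮θ⟯ →ₐ[ℚ] ℂ)).erase ι
  refine ⟨S.card, ∑ σ : ℚ⟮θ⟯ →ₐ[ℚ] ℂ, ‖σ g‖,
    fun N => ⟨|(a : ℝ)| ^ N * (|(a : ℝ)| ^ N) ^ S.card, ?_⟩⟩
  intro P hP hne B hB
  have hι : ‖aeval (ι g) P‖ = |aeval θ P| := by
    rw [← Real.norm_eq_abs, ← Complex.norm_real]
    exact congrArg _ (aeval_algHom_apply (Complex.ofRealAm.restrictScalars ℤ) θ P)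
  have hg : aeval g P ≠ 0 := fun h0 => hne <|
    (aeval_algHom_apply (ℚ⟮θ⟯.val.restrictScalars ℤ) g P).trans (by rw [h0, map_zero])
  have hone := hprod N P hP hg
  rw [← Finset.mul_prod_erase _ _ (Finset.mem_univ ι), hι] at hone
  have hle : ∏ σ ∈ S, (|(a : ℝ)| ^ N * ‖aeval (σ g) P‖) ≤ ∏ _σ ∈ S, |(a : ℝ)| ^ N * B := by
    refine Finset.prod_le_prod (fun _ _ => by positivity) fun σ _ => ?_
    gcongr
    exact hB _ (Finset.single_le_sum (f := fun σ : ℚ⟮θ⟯ →ₐ[ℚ] ℂ => ‖σ g‖)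
      (fun _ _ => norm_nonneg _) (Finset.mem_univ σ))
  rw [Finset.prod_const, mul_pow] at hle
  calc 1 ≤ |(a : ℝ)| ^ N * |aeval θ P| * ∏ σ ∈ S, (|(a : ℝ)| ^ N * ‖aeval (σ g) P‖) := hone
    _ ≤ |(a : ℝ)| ^ N * |aeval θ P| * ((|(a : ℝ)| ^ N) ^ S.card * B ^ S.card) := by gcongr
    _ = _ := by ring

end LowerBound

section Homogenization

variable {N : ℕ}

/-- The integer polynomial in the last variable obtained from a cube `c` of coefficients by putting
`u⁻¹`, `v⁻¹` for the first two variables, translating the last one by `w / u`, and clearing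
denominators. -/
noncomputable def homogenization (c : Fin (N + 1) × Fin (N + 1) × Fin (N + 1) → ℤ) (u v w : ℤ) :
    ℤ[X] :=
  ∑ x, C (c x * u ^ (N - x.1) * v ^ (N - x.2.1) * u ^ (N - x.2.2)) *
    (C u * X - C w) ^ (x.2.2 : ℕ)

theorem natDegree_homogenization_le (c : Fin (N + 1) × Fin (N + 1) × Fin (N + 1) → ℤ)
    (u v w : ℤ) : (homogenization c u v w).natDegree ≤ N := by
  refine natDegree_sum_le_of_forall_le _ _ fun x _ => ?_
  refine (natDegree_C_mul_le _ _).trans (natDegree_pow_le.trans ?_)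
  have hlin : (C u * X - C w).natDegree ≤ 1 := by compute_degree
  calc (x.2.2 : ℕ) * _ ≤ (x.2.2 : ℕ) * 1 := Nat.mul_le_mul_left _ hlin
    _ ≤ N := by omega

theorem aeval_homogenization {K : Type*} [Field K] {u v : ℤ} (hu : (u : K) ≠ 0)
    (hv : (v : K) ≠ 0) (c : Fin (N + 1) × Fin (N + 1) × Fin (N + 1) → ℤ) (w : ℤ) (z : K) :
    aeval z (homogenization c u v w) = (u ^ (2 * N) * v ^ N) * ∑ x,
      (c x : K) * ((u : K)⁻¹ ^ (x.1 : ℕ) * (v : K)⁻¹ ^ (x.2.1 : ℕ)) *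
        (z - w / u) ^ (x.2.2 : ℕ) := by
  simp only [homogenization, map_sum, map_mul, map_pow, map_sub, aeval_X, eq_intCast, map_intCast,
    Finset.mul_sum]
  refine Finset.sum_congr rfl fun x _ => ?_
  have hlin : (u : K) * z - w = u * (z - w / u) := by field_simp
  rw [hlin, pow_sub₀ _ hu (Nat.lt_succ_iff.1 x.1.2), pow_sub₀ _ hv (Nat.lt_succ_iff.1 x.2.1.2),
    pow_sub₀ _ hu (Nat.lt_succ_iff.1 x.2.2.2), mul_pow, ← inv_pow, ← inv_pow, ← inv_pow]
  generalize (z - w / u) ^ (x.2.2 : ℕ) = t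
  have hcancel : (u : K)⁻¹ ^ (x.2.2 : ℕ) * u ^ (x.2.2 : ℕ) = 1 := by
    rw [← mul_pow, inv_mul_cancel₀ hu, one_pow]
  linear_combination (c x * u ^ N * (u : K)⁻¹ ^ (x.1 : ℕ) * v ^ N * (v : K)⁻¹ ^ (x.2.1 : ℕ) *
    u ^ N * t) * hcancel

theorem norm_aeval_homogenization_le {u v : ℤ} (hu : u ≠ 0) (hv : v ≠ 0)
    (c : Fin (N + 1) × Fin (N + 1) × Fin (N + 1) → ℤ) {w : ℤ} {z : ℂ} {κ : ℝ}
    (hz : ‖z - w / u‖ ≤ κ) : ‖aeval z (homogenization c u v w)‖ ≤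
      (|(u : ℝ)| ^ (2 * N) * |(v : ℝ)| ^ N) * ∑ x, |(c x : ℝ)| * κ ^ (x.2.2 : ℕ) := by
  have hinv {k : ℤ} (hk : k ≠ 0) (j : ℕ) : ‖(k : ℂ)⁻¹ ^ j‖ ≤ 1 := by
    rw [norm_pow, norm_inv, Complex.norm_intCast]
    exact pow_le_one₀ (by positivity) (inv_le_one_of_one_le₀ (mod_cast Int.one_le_abs hk))
  rw [aeval_homogenization (Int.cast_ne_zero.2 hu) (Int.cast_ne_zero.2 hv), norm_mul, norm_mul,
    norm_pow, norm_pow, Complex.norm_intCast, Complex.norm_intCast]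
  refine mul_le_mul_of_nonneg_left ((norm_sum_le _ _).trans (Finset.sum_le_sum fun x _ => ?_))
    (by positivity)
  rw [norm_mul, norm_mul, norm_mul, norm_pow (z - w / u), Complex.norm_intCast]
  calc _ ≤ |(c x : ℝ)| * (1 * 1) * κ ^ (x.2.2 : ℕ) := by
        gcongr
        exacts [hinv hu _, hinv hv _]
    _ = _ := by rw [mul_one, mul_one]

end Homogenization

namespace MarkoffGrowth

variable {u : ℕ → ℤ}

theorem irrational_of_approx (h : MarkoffGrowth u) {a : ℤ} (ha : a ≠ 0) {n₀ : ℕ} {θ : ℝ}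
    (hθ : ∀ᶠ n in progression n₀, ∃ p : ℤ, θ = p / u n + gapSum u a n) : Irrational θ := by
  rintro ⟨r, rfl⟩
  have hlim := (((h.tendsto_mul_gapSum a).const_mul (r.den : ℝ)).abs).mono_left
    (progression_le_atTop n₀)
  rw [mul_zero, abs_zero] at hlim
  obtain ⟨n, ⟨⟨p, hp⟩, hlt⟩, hgap⟩ := ((hθ.and (hlim.eventually_lt_const one_pos)).and
    ((h.eventually_gapSum_ne_zero ha).filter_mono (progression_le_atTop n₀))).exists
  have hu := h.cast_ne_zero n
  have hden : (r.den : ℝ) ≠ 0 := Nat.cast_ne_zero.2 r.den_ne_zero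
  have hz : (r.den : ℝ) * (u n * gapSum u a n) = ((r.num * u n - r.den * p : ℤ) : ℝ) := by
    rw [eq_sub_of_add_eq' hp.symm, Rat.cast_def]
    push_cast
    field_simp
  have hz0 : r.num * u n - r.den * p = 0 := by
    rw [hz] at hlt
    exact Int.abs_lt_one_iff.1 (mod_cast hlt)
  rw [hz0, Int.cast_zero] at hz
  exact mul_ne_zero hden (mul_ne_zero hu hgap) hz

end MarkoffGrowth

namespace MarkoffGrowth

variable {u : ℕ → ℤ}

theorem exists_auxiliary_parameters (D : ℕ) :
    ∃ N M : ℕ, M ^ 2 < (N + 1) ^ 3 ∧ 4 * (N * (D + 1)) < M := by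
  refine ⟨(4 * (D + 1) + 1) ^ 2 - 1, (4 * (D + 1) + 1) ^ 3 - 1, ?_, ?_⟩
  · have hsq : (4 * (D + 1) + 1) ^ 2 - 1 + 1 = (4 * (D + 1) + 1) ^ 2 :=
      Nat.sub_add_cancel (Nat.one_le_pow _ _ (Nat.succ_pos _))
    rw [hsq, ← pow_mul, mul_comm 2 3, pow_mul]
    exact Nat.pow_lt_pow_left (Nat.sub_lt (by positivity) one_pos) two_ne_zero
  · zify [Nat.one_le_pow _ _ (Nat.succ_pos (4 * (D + 1)))]
    nlinarith

theorem tendsto_abs_mul_denominator_pow (h : MarkoffGrowth u) {E : ℕ → ℝ} {M N D : ℕ}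
    (hE : E =O[atTop] fun n => invSeq u n ^ M) (hlt : 4 * (N * (D + 1)) < M) :
    Tendsto (fun n => |E n| * (|(u n : ℝ)| ^ (2 * N) * |(u (n + 1) : ℝ)| ^ N) ^ (D + 1))
      atTop (𝓝 0) := by
  have hw : ((2 * N * (D + 1) : ℕ) : ℤ) + gold * ((N * (D + 1) : ℕ) : ℤ) < M := by
    have hcast : 4 * ((N * (D + 1) : ℕ) : ℝ) < M := mod_cast hlt
    have hmul : gold * ((N * (D + 1) : ℕ) : ℝ) ≤ 2 * ((N * (D + 1) : ℕ) : ℝ) :=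
      mul_le_mul_of_nonneg_right Real.goldenRatio_lt_two.le (Nat.cast_nonneg _)
    push_cast at hcast hmul ⊢
    linarith
  have hlim := (hE.trans_isLittleO
    (h.powerDecay.pow_isLittleO_pairMonomial hw)).tendsto_div_nhds_zero.abs
  rw [abs_zero] at hlim
  refine hlim.congr fun n => ?_
  simp only [pairMonomial, invSeq, zpow_natCast, inv_pow, abs_div, abs_mul, abs_inv, abs_pow]
  field_simp
  ring

theorem exists_eventually_one_le_of_isAlgebraic (h : MarkoffGrowth u) {a : ℤ} {n₀ : ℕ} {θ : ℝ}
    (halg : IsAlgebraic ℚ θ)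
    (hθ : ∀ᶠ n in progression n₀, ∃ p : ℤ, θ = p / u n + gapSum u a n) :
    ∃ D : ℕ, ∀ (N : ℕ) (c : Fin (N + 1) × Fin (N + 1) × Fin (N + 1) → ℤ), ∃ C : ℝ,
      ∀ᶠ n in progression n₀,
        (auxPoly (N + 1) fun x => (c x : ℚ)).eval₂ (pairEval (invSeq u) : _ →+* (ℕ → ℝ))
          (gapSum u a) n ≠ 0 →
        1 ≤ C * (|(auxPoly (N + 1) fun x => (c x : ℚ)).eval₂
          (pairEval (invSeq u) : _ →+* (ℕ → ℝ)) (gapSum u a) n| *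
            (|(u n : ℝ)| ^ (2 * N) * |(u (n + 1) : ℝ)| ^ N) ^ (D + 1)) := by
  obtain ⟨D, T, hbound⟩ := exists_one_le_mul_aeval_mul_pow halg
  refine ⟨D, fun N c => ?_⟩
  obtain ⟨C, hC⟩ := hbound N
  refine ⟨C * (∑ x, |(c x : ℝ)| * (T + (|θ| + 1)) ^ (x.2.2 : ℕ)) ^ D, ?_⟩
  have hsmall := (h.tendsto_gapSum a).abs.mono_left (progression_le_atTop n₀)
  rw [abs_zero] at hsmall
  filter_upwards [hθ, hsmall.eventually_le_const one_pos] with n ⟨p, hp⟩ hgap hne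
  have hu := h.cast_ne_zero n
  have hv := h.cast_ne_zero (n + 1)
  have hvalue : aeval θ (homogenization c (u n) (u (n + 1)) p) =
      (u n ^ (2 * N) * u (n + 1) ^ N) * (auxPoly (N + 1) fun x => (c x : ℚ)).eval₂
        (pairEval (invSeq u) : _ →+* (ℕ → ℝ)) (gapSum u a) n := by
    rw [aeval_homogenization hu hv, eval₂_auxPoly, sub_eq_of_eq_add' hp]
    simp only [invSeq, Rat.cast_intCast]
  have hcenter : ‖(p / u n : ℂ)‖ ≤ |θ| + 1 := by
    rw [← Complex.ofReal_intCast, ← Complex.ofReal_intCast, ← Complex.ofReal_div,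
      Complex.norm_real, Real.norm_eq_abs, eq_sub_of_add_eq hp.symm]
    exact (abs_sub _ _).trans (by gcongr)
  have hone := hC _ (natDegree_homogenization_le c (u n) (u (n + 1)) p)
    (hvalue ▸ mul_ne_zero (mul_ne_zero (pow_ne_zero _ hu) (pow_ne_zero _ hv)) hne) _
    fun z hz => norm_aeval_homogenization_le (Int.cast_ne_zero.1 hu) (Int.cast_ne_zero.1 hv) c
      ((norm_sub_le _ _).trans (add_le_add hz hcenter))
  rw [hvalue, abs_mul, abs_mul, abs_pow, abs_pow] at hone
  refine hone.trans_eq ?_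
  ring

theorem transcendental_of_approx (h : MarkoffGrowth u) {a : ℤ} (ha : a ≠ 0) {n₀ : ℕ} {θ : ℝ}
    (hθ : ∀ᶠ n in progression n₀, ∃ p : ℤ, θ = p / u n + gapSum u a n) :
    Transcendental ℚ θ := by
  intro halg
  obtain ⟨D, hliouville⟩ := h.exists_eventually_one_le_of_isAlgebraic halg hθ
  obtain ⟨N, M, hM, hN⟩ := exists_auxiliary_parameters D
  obtain ⟨c, hc, hsmall⟩ :=
    h.powerDecay.exists_auxPoly_isBigO one_lt_gold.le (h.gapSum_mem a) hM
  obtain ⟨C, hC⟩ := hliouville N c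
  have hlim := ((h.tendsto_abs_mul_denominator_pow hsmall hN).const_mul C).mono_left
    (progression_le_atTop n₀)
  rw [mul_zero] at hlim
  have hirr : ∀ᶠ n in progression n₀, Irrational (gapSum u a n) := by
    filter_upwards [hθ] with n ⟨p, hp⟩
    refine (irrational_ratCast_add_iff (q := p / u n)).1 ?_
    rw [Rat.cast_div, Rat.cast_intCast, Rat.cast_intCast, ← hp]
    exact h.irrational_of_approx ha hθ
  have hc' : (fun x => (c x : ℚ)) ≠ 0 := fun h0 =>
    hc (funext fun x => Int.cast_injective ((congrFun h0 x).trans Int.cast_zero.symm))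
  obtain ⟨n, hn, hle, hlt⟩ := ((h.frequently_eval₂_ne_zero (h.transcendental_gapSum hirr)
    (auxPoly_ne_zero hc')).and_eventually (hC.and (hlim.eventually_lt_const one_pos))).exists
  exact (hle hn).not_gt hlt

end MarkoffGrowth

section RationalApproximation

theorem ratHeight_div_le (p : ℤ) {q : ℤ} (hq : q ≠ 0) :
    ratHeight (p / q) ≤ |(p : ℝ)| + |(q : ℝ)| := by
  rw [← Rat.divInt_eq_div]
  have hden : ((Rat.divInt p q).den : ℤ) ≤ |q| :=
    Int.le_of_dvd (abs_pos.2 hq) ((dvd_abs _ _).2 (Rat.den_dvd p q))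
  have hnum : |(Rat.divInt p q).num| ≤ |p| := by
    rcases eq_or_ne p 0 with rfl | hp
    · rw [Rat.zero_divInt, Rat.num_zero]
    · exact Int.le_of_dvd (abs_pos.2 hp) ((abs_dvd_abs _ _).2 (Rat.num_dvd p hq))
  exact max_le (le_add_of_le_of_nonneg (mod_cast hnum) (abs_nonneg _))
    (le_add_of_nonneg_of_le (abs_nonneg _) (mod_cast hden))

theorem one_le_den (α : ℚ) : (1 : ℝ) ≤ α.den := mod_cast α.pos

theorem ratHeight_pos (α : ℚ) : 0 < ratHeight α :=
  one_pos.trans_le ((one_le_den α).trans (le_max_right _ _))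

theorem ratHeight_le_of_abs_sub_le_one {δ : ℝ} {p q : ℤ} (hq : q ≠ 0) (hδ : |δ - p / q| ≤ 1) :
    ratHeight (p / q) ≤ (|δ| + 2) * |(q : ℝ)| := by
  have hquot : |(p : ℝ) / q| ≤ |δ| + 1 := by
    have htri := abs_sub_abs_le_abs_sub ((p : ℝ) / q) δ
    rw [abs_sub_comm] at htri
    linarith
  rw [abs_div, div_le_iff₀ (abs_pos.2 (Int.cast_ne_zero.2 hq))] at hquot
  linarith [ratHeight_div_le p hq]

theorem infinite_of_tendsto_irrational {ι : Type*} {l : Filter ι} [l.NeBot] {δ : ℝ}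
    (hδ : Irrational δ) {α : ι → ℚ} (hα : Tendsto (fun i => (α i : ℝ)) l (𝓝 δ)) {S : Set ℚ}
    (hS : ∀ᶠ i in l, α i ∈ S) : S.Infinite := by
  intro hfin
  obtain ⟨β, -, hβ⟩ := (hfin.image ((↑) : ℚ → ℝ)).isClosed.mem_of_tendsto hα
    (hS.mono fun i hi => Set.mem_image_of_mem _ hi)
  exact hδ ⟨β, hβ⟩

theorem one_div_le_abs_sub_of_num_mul_ne {δ ε : ℝ} {p k : ℤ} (hk : k ≠ 0) (hδ : δ = p / k + ε)
    {α : ℚ} (hα : α.num * k ≠ p * α.den) (hε : |ε| ≤ 1 / (2 * α.den * |(k : ℝ)|)) :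
    1 / (2 * α.den * |(k : ℝ)|) ≤ |δ - α| := by
  have hk' : (k : ℝ) ≠ 0 := Int.cast_ne_zero.2 hk
  have hq : (0 : ℝ) < α.den := one_pos.trans_le (one_le_den α)
  have hone : (1 : ℝ) ≤ |((α.num * k - p * α.den : ℤ) : ℝ)| :=
    mod_cast Int.one_le_abs (sub_ne_zero.2 hα)
  have hdiff : (α : ℝ) - p / k = ((α.num * k - p * α.den : ℤ) : ℝ) / (α.den * k) := by
    rw [Rat.cast_def]
    push_cast
    field_simp
  have hsep : 1 / (α.den * |(k : ℝ)|) ≤ |(α : ℝ) - p / k| := by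
    rw [hdiff, abs_div, abs_mul, abs_of_pos hq]
    gcongr
  have htri : |(α : ℝ) - p / k| ≤ |ε| + |δ - α| := by
    have hsplit : (α : ℝ) - p / k = ε - (δ - α) := by linear_combination hδ
    exact hsplit ▸ abs_sub _ _
  have hhalf : 1 / (α.den * |(k : ℝ)|) = 2 * (1 / (2 * α.den * |(k : ℝ)|)) := by field_simp
  linarith

end RationalApproximation

namespace MarkoffGrowth

variable {u : ℕ → ℤ}

theorem ne_zero (h : MarkoffGrowth u) (n : ℕ) : u n ≠ 0 := Int.cast_ne_zero.1 (h.cast_ne_zero n)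

theorem abs_invSeq_rpow (n : ℕ) (r : ℝ) : |invSeq u n| ^ r = |(u n : ℝ)| ^ (-r) := by
  rw [invSeq, abs_inv, Real.inv_rpow (abs_nonneg _), Real.rpow_neg (abs_nonneg _)]

theorem exists_infinite_approx (h : MarkoffGrowth u) {a : ℤ} {n₀ : ℕ} {δ : ℝ}
    (hirr : Irrational δ) (hδ : ∀ᶠ n in progression n₀, ∃ p : ℤ, δ = p / u n + gapSum u a n) :
    ∃ c₄ : ℝ, 0 < c₄ ∧ {α : ℚ | |δ - (α : ℝ)| ≤ c₄ * ratHeight α ^ (-gold - 2)}.Infinite := by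
  obtain ⟨C, hC, hbound⟩ := (h.gapSum_isBigO a).exists_pos
  have hgap := (h.tendsto_gapSum a).mono_left (progression_le_atTop n₀)
  have hle : ∀ᶠ n in progression n₀, |gapSum u a n| ≤ 1 :=
    (hgap.abs.eventually_lt_const (by rw [abs_zero]; exact one_pos)).mono fun _ => le_of_lt
  choose! p hp using fun n (hn : ∃ p : ℤ, δ = p / u n + gapSum u a n) => hn
  have hsub {n : ℕ} (hn : ∃ p : ℤ, δ = p / u n + gapSum u a n) :
      δ - ((p n / u n : ℚ) : ℝ) = gapSum u a n := by
    rw [Rat.cast_div, Rat.cast_intCast, Rat.cast_intCast]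
    exact sub_eq_of_eq_add' (hp n hn)
  refine ⟨C * (|δ| + 2) ^ (gold + 2), by positivity, infinite_of_tendsto_irrational hirr
    (α := fun n => p n / u n) (l := progression n₀) ?_ ?_⟩
  · have hlim := hgap.const_sub δ
    rw [sub_zero] at hlim
    exact hlim.congr' (hδ.mono fun n hn => by rw [← hsub hn, sub_sub_cancel])
  · filter_upwards [hδ, hle, hbound.bound.filter_mono (progression_le_atTop n₀)] with n hn hn1 hnC
    have hheight := ratHeight_le_of_abs_sub_le_one (h.ne_zero n) (δ := δ) (p := p n)
      (by rwa [sub_eq_of_eq_add' (hp n hn)])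
    rw [abs_invSeq_rpow, Real.norm_eq_abs, Real.norm_eq_abs, Real.abs_rpow_of_nonneg
      (abs_nonneg _), abs_abs] at hnC
    change |δ - ((p n / u n : ℚ) : ℝ)| ≤ _
    rw [hsub hn]
    calc |gapSum u a n| ≤ C * |(u n : ℝ)| ^ (-(gold + 2)) := hnC
      _ = C * (|δ| + 2) ^ (gold + 2) * ((|δ| + 2) * |(u n : ℝ)|) ^ (-gold - 2) := by
        rw [Real.mul_rpow (by positivity) (abs_nonneg _), ← neg_add',
          Real.rpow_neg (by positivity : 0 ≤ |δ| + 2)]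
        field_simp
      _ ≤ C * (|δ| + 2) ^ (gold + 2) * ratHeight (p n / u n) ^ (-gold - 2) := by
        refine mul_le_mul_of_nonneg_left ?_ (by positivity)
        exact Real.rpow_le_rpow_of_nonpos (ratHeight_pos _) hheight (by linarith [one_lt_gold])

theorem dvd_zero_of_dvd (h : MarkoffGrowth u) {d : ℤ} {n : ℕ} (hn : d ∣ u n)
    (hn' : d ∣ u (n + 1)) : d ∣ u 0 := by
  induction n with
  | zero => exact hn
  | succ n ih =>
    refine ih ((Int.pow_dvd_pow_iff two_ne_zero).1 ?_) hn
    have hsq : u n ^ 2 = 3 * u n * (u (n + 1) * u (n + 2)) - (u (n + 1) ^ 2 + u (n + 2) ^ 2) := by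
      linear_combination h.markoff n
    rw [hsq]
    refine dvd_sub (Dvd.dvd.mul_left ?_ _) (dvd_add (pow_dvd_pow_of_dvd hn 2)
      (pow_dvd_pow_of_dvd hn' 2))
    exact sq d ▸ mul_dvd_mul hn hn'

theorem dvd_mul_zero_of_dvd_mul_succ (h : MarkoffGrowth u) {b : ℤ} {n : ℕ}
    (hdvd : u n ∣ b * u (n + 1)) : u n ∣ b * u 0 := by
  have hgcd : u n ∣ b * (Int.gcd (u n) (u (n + 1)) : ℤ) := by
    rw [Int.gcd_eq_gcd_ab, mul_add, ← mul_assoc, ← mul_assoc]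
    exact dvd_add ((dvd_mul_left _ _).mul_right _) (hdvd.mul_right _)
  exact hgcd.trans (mul_dvd_mul_left _
    (h.dvd_zero_of_dvd (Int.gcd_dvd_left ..) (Int.gcd_dvd_right ..)))

theorem dvd_mul_succ_of_num_mul_eq (h : MarkoffGrowth u) {a : ℤ} {n : ℕ} {p p' : ℤ}
    (hp : p / u n + gapSum u a n = p' / u (n + 3) + gapSum u a (n + 3)) {α : ℚ}
    (hα : α.num * u n = p * α.den) : u n ∣ a * α.den * u (n + 1) := by
  refine ⟨α.den * p' - α.num * u (n + 3), ?_⟩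
  have h0 := h.cast_ne_zero n
  have h3 := h.cast_ne_zero (n + 3)
  have hstep : (p' : ℝ) * u n - p * u (n + 3) = a * u (n + 1) := by
    rw [h.gapSum_eq_add, gapSeq] at hp
    field_simp at hp
    linear_combination -hp
  have hstep' : p' * u n - p * u (n + 3) = a * u (n + 1) := mod_cast hstep
  linear_combination -α.den * hstep' + u (n + 3) * hα

theorem abs_le_of_num_mul_eq (h : MarkoffGrowth u) {a : ℤ} (ha : a ≠ 0) {n : ℕ} {p p' : ℤ}
    (hp : p / u n + gapSum u a n = p' / u (n + 3) + gapSum u a (n + 3)) {α : ℚ}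
    (hα : α.num * u n = p * α.den) : |(u n : ℝ)| ≤ |(a : ℝ)| * |(u 0 : ℝ)| * α.den := by
  have hdvd := h.dvd_mul_zero_of_dvd_mul_succ (h.dvd_mul_succ_of_num_mul_eq hp hα)
  have hne : a * α.den * u 0 ≠ 0 :=
    mul_ne_zero (mul_ne_zero ha (Int.natCast_ne_zero.2 α.den_nz)) (h.ne_zero 0)
  have hle : |u n| ≤ |a * α.den * u 0| :=
    Int.le_of_dvd (abs_pos.2 hne) ((abs_dvd_abs _ _).2 hdvd)
  rw [abs_mul, abs_mul, Nat.abs_cast, mul_right_comm] at hle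
  exact_mod_cast hle

theorem exists_abs_succ_le (h : MarkoffGrowth u) :
    ∃ B : ℝ, 0 < B ∧ ∀ n, |(u (n + 1) : ℝ)| ≤ B * |(u n : ℝ)| ^ gold := by
  obtain ⟨B, hB, hbound⟩ := bound_of_isBigO_nat_atTop h.powerDecay.succ_isTheta.isBigO_symm
  refine ⟨B, hB, fun n => ?_⟩
  have hn := hbound (h.powerDecay.ne_zero (n + 1))
  have h0 := abs_pos.2 (h.cast_ne_zero n)
  have h1 := abs_pos.2 (h.cast_ne_zero (n + 1))
  rw [abs_invSeq_rpow, Real.norm_eq_abs, Real.norm_eq_abs, Real.abs_rpow_of_nonneg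
    (abs_nonneg _), abs_abs, invSeq, abs_inv, Real.rpow_neg h0.le, ← div_eq_mul_inv,
    le_div_iff₀ h1, inv_mul_le_iff₀ (Real.rpow_pos_of_pos h0 _), mul_comm] at hn
  exact hn

theorem tendsto_abs_atTop (h : MarkoffGrowth u) :
    Tendsto (fun n => |(u n : ℝ)|) atTop atTop := by
  have hinv := (tendsto_nhdsWithin_of_tendsto_nhds_of_eventually_within _ h.powerDecay.tendsto_abs
    (Eventually.of_forall h.powerDecay.abs_pos)).inv_tendsto_nhdsGT_zero
  exact hinv.congr fun n => by rw [Pi.inv_apply, invSeq, abs_inv, inv_inv]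

theorem gapSum_isBigO_inv_mul (h : MarkoffGrowth u) (a : ℤ) :
    gapSum u a =O[atTop] fun n => ((u n : ℝ) * u (n + 2))⁻¹ := by
  have hd := h.powerDecay
  have hinv : (fun n => ((u n : ℝ) * u (n + 2))⁻¹) =Θ[atTop]
      fun n => |invSeq u n| ^ (gold + 2) := by
    have hself : invSeq u =Θ[atTop] fun n => |invSeq u n| := (isTheta_refl _ _).norm_right
    simp only [mul_inv]
    refine (hself.mul (hd.add_isTheta 2)).trans_eventuallyEq (Eventually.of_forall fun n => ?_)
    dsimp only
    rw [gold_sq, show gold + 2 = 1 + (gold + 1) by ring, Real.rpow_one_add' (abs_nonneg _)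
      (by linarith [one_lt_gold])]
  exact (h.gapSum_isBigO a).trans hinv.isBigO_symm

theorem exists_index_of_eventually (h : MarkoffGrowth u) {n₀ : ℕ} {P : ℕ → Prop}
    (hP : ∀ᶠ n in progression n₀, P n) {C : ℝ} (hC : 0 < C) : ∃ L : ℝ, 0 < L ∧
      ∀ q : ℝ, 1 ≤ q → ∃ n, P n ∧ C * q ≤ |(u (n + 2) : ℝ)| ∧ |(u n : ℝ)| ≤ L * q ^ gold := by
  obtain ⟨i₀, hi₀⟩ := eventually_atTop.1 (eventually_progression.1 hP)
  obtain ⟨B, hB, hsucc⟩ := h.exists_abs_succ_le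
  set m : ℕ → ℕ := fun j => n₀ + 3 * (i₀ + j)
  refine ⟨|(u (m 0) : ℝ)| + B * C ^ gold, by positivity, fun q hq => ?_⟩
  have hexists : ∃ j, C * q ≤ |(u (m j + 2) : ℝ)| := by
    have hm : Tendsto (fun j => m j + 2) atTop atTop :=
      tendsto_atTop_mono (fun j => show j ≤ n₀ + 3 * (i₀ + j) + 2 by omega) tendsto_id
    exact ((h.tendsto_abs_atTop.comp hm).eventually_ge_atTop (C * q)).exists
  have hmin (i : ℕ) := Nat.find_min hexists (m := i)
  have hfound := Nat.find_spec hexists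
  generalize Nat.find hexists = j at hmin hfound
  refine ⟨m j, hi₀ _ (Nat.le_add_right _ _), hfound, ?_⟩
  cases j with
  | zero =>
    refine (le_add_of_nonneg_right (by positivity)).trans
      (le_mul_of_one_le_right (by positivity) ?_)
    exact Real.one_le_rpow hq (one_pos.trans one_lt_gold).le
  | succ j =>
    have hprev := (not_le.1 (hmin j (Nat.lt_succ_self j))).le
    calc |(u (m j + 2 + 1) : ℝ)| ≤ B * |(u (m j + 2) : ℝ)| ^ gold := hsucc _
      _ ≤ B * (C * q) ^ gold := by
        gcongr
        exact (one_pos.trans one_lt_gold).le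
      _ = B * C ^ gold * q ^ gold := by
        rw [Real.mul_rpow hC.le (one_pos.trans_le hq).le, mul_assoc]
      _ ≤ (|(u (m 0) : ℝ)| + B * C ^ gold) * q ^ gold := by
        gcongr
        exact le_add_of_nonneg_left (abs_nonneg _)

theorem mul_rpow_le_abs_sub_of_num_mul_eq (h : MarkoffGrowth u) {a : ℤ} (ha : a ≠ 0) {n : ℕ}
    {δ c : ℝ} {p p' : ℤ} (hδ : δ = p / u n + gapSum u a n)
    (hδ' : δ = p' / u (n + 3) + gapSum u a (n + 3)) (hc : 0 ≤ c)
    (hgap : c * |invSeq u n| ^ (gold + 2) ≤ |gapSum u a n|) {α : ℚ}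
    (hα : α.num * u n = p * α.den) :
    c * (|(a : ℝ)| * |(u 0 : ℝ)| * α.den) ^ (-gold - 2) ≤ |δ - α| := by
  have hq : (α.den : ℝ) ≠ 0 := Nat.cast_ne_zero.2 α.den_nz
  have hsub : δ - α = gapSum u a n := by
    have hα' : (α.num : ℝ) * u n = p * α.den := mod_cast hα
    rw [hδ, Rat.cast_def, (div_eq_div_iff hq (h.cast_ne_zero n)).2 hα', add_sub_cancel_left]
  rw [hsub]
  refine le_trans (mul_le_mul_of_nonneg_left ?_ hc) hgap
  rw [abs_invSeq_rpow, neg_add']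
  exact Real.rpow_le_rpow_of_nonpos (abs_pos.2 (h.cast_ne_zero n))
    (h.abs_le_of_num_mul_eq ha (hδ.symm.trans hδ') hα) (by linarith [one_lt_gold])

theorem mul_rpow_le_abs_sub_of_num_mul_ne (h : MarkoffGrowth u) {a : ℤ} {n : ℕ} {δ C L : ℝ} {p : ℤ}
    (hδ : δ = p / u n + gapSum u a n) (hgap : |gapSum u a n| ≤ C * |((u n : ℝ) * u (n + 2))⁻¹|)
    {α : ℚ} (hα : α.num * u n ≠ p * α.den) (hlow : 2 * C * α.den ≤ |(u (n + 2) : ℝ)|)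
    (hupp : |(u n : ℝ)| ≤ L * (α.den : ℝ) ^ gold) (hL : 0 < L) :
    (2 * L)⁻¹ * (α.den : ℝ) ^ (-gold - 2) ≤ |δ - α| := by
  have hq := one_le_den α
  have hu := abs_pos.2 (h.cast_ne_zero n)
  have hu2 := abs_pos.2 (h.cast_ne_zero (n + 2))
  have hsmall : |gapSum u a n| ≤ 1 / (2 * α.den * |(u n : ℝ)|) := by
    refine hgap.trans ?_
    rw [abs_inv, abs_mul, ← div_eq_mul_inv, div_le_div_iff₀ (by positivity) (by positivity)]
    nlinarith
  calc (2 * L)⁻¹ * (α.den : ℝ) ^ (-gold - 2) ≤ (2 * L)⁻¹ * (α.den : ℝ) ^ (-(gold + 1)) := by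
        gcongr ?_ * ?_
        exact Real.rpow_le_rpow_of_exponent_le hq (by linarith)
    _ = 1 / (2 * α.den * (L * (α.den : ℝ) ^ gold)) := by
        rw [Real.rpow_neg (by positivity), Real.rpow_add_one (by positivity)]
        field_simp
    _ ≤ 1 / (2 * α.den * |(u n : ℝ)|) := by gcongr
    _ ≤ |δ - α| := one_div_le_abs_sub_of_num_mul_ne (h.ne_zero n) hδ hα hsmall

theorem exists_mul_rpow_le_abs_sub (h : MarkoffGrowth u) {a : ℤ} (ha : a ≠ 0) {n₀ : ℕ} {δ : ℝ}
    (hδ : ∀ᶠ n in progression n₀, ∃ p : ℤ, δ = p / u n + gapSum u a n) :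
    ∃ c : ℝ, 0 < c ∧ ∀ α : ℚ, c * (α.den : ℝ) ^ (-gold - 2) ≤ |δ - α| := by
  obtain ⟨c, hc, hlower⟩ := (h.gapSum_isTheta ha).isBigO_symm.exists_pos
  obtain ⟨C, hC, hupper⟩ := (h.gapSum_isBigO_inv_mul a).exists_pos
  have hbounds := (hlower.bound.and hupper.bound).filter_mono (progression_le_atTop n₀)
  obtain ⟨L, hL, hindex⟩ := h.exists_index_of_eventually
    ((hδ.and ((tendsto_add_three_progression n₀).eventually hδ)).and hbounds)
    (mul_pos two_pos hC)
  set K : ℝ := |(a : ℝ)| * |(u 0 : ℝ)|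
  have hK : 0 < K := mul_pos (abs_pos.2 (Int.cast_ne_zero.2 ha)) (abs_pos.2 (h.cast_ne_zero 0))
  refine ⟨min (c⁻¹ * K ^ (-gold - 2)) (2 * L)⁻¹, by positivity, fun α => ?_⟩
  obtain ⟨n, ⟨⟨⟨p, hp⟩, p', hp'⟩, hcn, hCn⟩, hlow, hupp⟩ := hindex α.den (one_le_den α)
  have hden : (0 : ℝ) ≤ (α.den : ℝ) ^ (-gold - 2) := by positivity
  rcases eq_or_ne (α.num * u n) (p * α.den) with hα | hα
  · refine (mul_le_mul_of_nonneg_right (min_le_left _ _) hden).trans ?_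
    rw [mul_assoc, ← Real.mul_rpow hK.le (Nat.cast_nonneg _)]
    refine h.mul_rpow_le_abs_sub_of_num_mul_eq ha hp hp' (inv_nonneg.2 hc.le) ?_ hα
    rw [inv_mul_le_iff₀ hc]
    simpa [Real.abs_rpow_of_nonneg] using hcn
  · exact (mul_le_mul_of_nonneg_right (min_le_right _ _) hden).trans
      (h.mul_rpow_le_abs_sub_of_num_mul_ne hp hCn hα hlow hupp hL)

theorem exists_lower_approx (h : MarkoffGrowth u) {a : ℤ} (ha : a ≠ 0) {n₀ : ℕ} {δ : ℝ}
    (hδ : ∀ᶠ n in progression n₀, ∃ p : ℤ, δ = p / u n + gapSum u a n) :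
    ∃ c₅ : ℝ, 0 < c₅ ∧ ∀ α : ℚ, ¬ (|δ - (α : ℝ)| ≤ c₅ * ratHeight α ^ (-gold - 2)) := by
  obtain ⟨c, hc, hlower⟩ := h.exists_mul_rpow_le_abs_sub ha hδ
  refine ⟨c / 2, half_pos hc, fun α => not_le.2 ?_⟩
  have hden : (0 : ℝ) < α.den := one_pos.trans_le (one_le_den α)
  calc c / 2 * ratHeight α ^ (-gold - 2) ≤ c / 2 * (α.den : ℝ) ^ (-gold - 2) :=
        mul_le_mul_of_nonneg_left (Real.rpow_le_rpow_of_nonpos hden (le_max_right _ _)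
          (by linarith [one_lt_gold])) (half_pos hc).le
    _ < c * (α.den : ℝ) ^ (-gold - 2) := by
        gcongr
        exact half_lt_self hc
    _ ≤ |δ - α| := hlower α

end MarkoffGrowth

section DistInt

theorem distInt_eq_norm (y : ℝ) : distInt y = ‖(y : UnitAddCircle)‖ := UnitAddCircle.norm_eq.symm

theorem continuous_distInt : Continuous distInt := by
  rw [funext distInt_eq_norm]
  exact continuous_norm.comp (AddCircle.continuous_mk' 1)

theorem distInt_add_intCast (y : ℝ) (z : ℤ) : distInt (y + z) = distInt y := by
  rw [distInt, distInt, round_add_intCast]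
  push_cast
  rw [add_sub_add_right_eq_sub]

theorem exists_distInt_eq (y : ℝ) : ∃ ε z : ℤ, ε ≠ 0 ∧ distInt y = ε * y + z := by
  rcases abs_choice (y - round y) with h | h
  · exact ⟨1, -round y, one_ne_zero, by rw [distInt, h]; push_cast; ring⟩
  · exact ⟨-1, round y, by decide, by rw [distInt, h]; push_cast; ring⟩

end DistInt

theorem neg_one_pow_sq {R : Type*} [Ring R] (k : ℕ) : ((-1 : R) ^ k) ^ 2 = 1 := by
  rw [pow_right_comm, neg_one_sq, one_pow]

/-- Entrywise form of the algebraic conditions on a Markoff sequence of symmetric matrices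
`((u k, v k), (v k, w k))`. -/
structure EntryRelations (u v w : ℕ → ℤ) : Prop where
  det : ∀ k, u k * w k - v k ^ 2 = 1
  u_left : ∀ k, u (k + 2) = 3 * u (k + 1) * u k - (-1) ^ k * (u (k + 1) * v k - v (k + 1) * u k)
  v_left : ∀ k, v (k + 2) = 3 * u (k + 1) * v k - (-1) ^ k * (u (k + 1) * w k - v (k + 1) * v k)
  v_left' : ∀ k, v (k + 2) = 3 * v (k + 1) * u k - (-1) ^ k * (v (k + 1) * v k - w (k + 1) * u k)
  w_left : ∀ k, w (k + 2) = 3 * v (k + 1) * v k - (-1) ^ k * (v (k + 1) * w k - w (k + 1) * v k)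

namespace EntryRelations

variable {u v w : ℕ → ℤ}

section Minors

theorem minor_succ_uv (h : EntryRelations u v w) (k : ℕ) :
    u (k + 1) * v (k + 2) - v (k + 1) * u (k + 2) = (-1) ^ k * u k := by
  linear_combination
    u (k + 1) * h.v_left' k - v (k + 1) * h.u_left k + (-1) ^ k * u k * h.det (k + 1)

theorem minor_succ_uw (h : EntryRelations u v w) (k : ℕ) :
    u (k + 1) * w (k + 2) - v (k + 1) * v (k + 2) = (-1) ^ k * v k := by
  linear_combination
    u (k + 1) * h.w_left k - v (k + 1) * h.v_left k + (-1) ^ k * v k * h.det (k + 1)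

theorem minor_succ_vw (h : EntryRelations u v w) (k : ℕ) :
    v (k + 1) * w (k + 2) - w (k + 1) * v (k + 2) = (-1) ^ k * w k - 3 * v k := by
  linear_combination v (k + 1) * h.w_left k - w (k + 1) * h.v_left k
    + ((-1) ^ k * w k - 3 * v k) * h.det (k + 1)

theorem minor_add_two_uv (h : EntryRelations u v w) (k : ℕ) :
    u k * v (k + 2) - v k * u (k + 2) = -(-1) ^ k * u (k + 1) := by
  linear_combination u k * h.v_left k - v k * h.u_left k - (-1) ^ k * u (k + 1) * h.det k

theorem minor_add_two_uw (h : EntryRelations u v w) (k : ℕ) :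
    u k * w (k + 2) - v k * v (k + 2) = -(-1) ^ k * v (k + 1) := by
  linear_combination u k * h.w_left k - v k * h.v_left' k - (-1) ^ k * v (k + 1) * h.det k

theorem minor_add_two_vw (h : EntryRelations u v w) (k : ℕ) :
    v k * v (k + 2) - w k * u (k + 2) = -(-1) ^ k * v (k + 1) - 3 * u (k + 1) := by
  linear_combination v k * h.v_left k - w k * h.u_left k
    + (-(-1) ^ k * v (k + 1) - 3 * u (k + 1)) * h.det k

theorem mul_add_two_sub_mul (h : EntryRelations u v w) (k : ℕ) :
    u (k + 2) * w k - u k * w (k + 2) = 2 * (-1) ^ k * v (k + 1) + 3 * u (k + 1) := by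
  linear_combination -h.minor_add_two_uw k - h.minor_add_two_vw k

end Minors

section Recurrences

theorem u_add_three (h : EntryRelations u v w) (k : ℕ) :
    u (k + 3) = 3 * u (k + 1) * u (k + 2) - u k := by
  have hleft := h.u_left (k + 1)
  rw [pow_succ] at hleft
  linear_combination hleft - (-1) ^ k * h.minor_succ_uv k - u k * neg_one_pow_sq (R := ℤ) k

theorem v_add_three (h : EntryRelations u v w) (k : ℕ) :
    v (k + 3) = 3 * u (k + 1) * v (k + 2) - v k := by
  have hleft := h.v_left' (k + 1)
  rw [pow_succ] at hleft
  linear_combination hleft - (-1) ^ k * h.minor_succ_uw k - v k * neg_one_pow_sq (R := ℤ) k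

theorem w_add_three (h : EntryRelations u v w) (k : ℕ) :
    w (k + 3) = 3 * u (k + 1) * w (k + 2) - w k := by
  have hleft := h.w_left (k + 1)
  rw [pow_succ] at hleft
  linear_combination hleft - (-1) ^ k * h.minor_succ_vw k - 3 * h.minor_succ_uw k
    - w k * neg_one_pow_sq (R := ℤ) k

theorem markoff (h : EntryRelations u v w) (k : ℕ) :
    u k ^ 2 + u (k + 1) ^ 2 + u (k + 2) ^ 2 = 3 * u k * u (k + 1) * u (k + 2) := by
  linear_combination u (k + 2) * h.u_left k - (-1) ^ k * u k * h.minor_succ_uv k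
    + (-1) ^ k * u (k + 1) * h.minor_add_two_uv k
    - (u k ^ 2 + u (k + 1) ^ 2) * neg_one_pow_sq (R := ℤ) k

theorem u_mul_add_three (h : EntryRelations u v w) (k : ℕ) :
    u k * u (k + 3) = u (k + 1) ^ 2 + u (k + 2) ^ 2 := by
  linear_combination u k * h.u_add_three k - h.markoff k

end Recurrences

/-- The numerator of an approximation of `w k * ξ` with denominator `u (k + 2)`. The terms after
the first one are negligible with respect to `u (k + 2)`; they are chosen so as to make
`numer_add_three` hold. -/
def numer (u v w : ℕ → ℤ) (k : ℕ) : ℤ :=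
  w k * v (k + 2) + (-1) ^ k * w (k + 1) + 6 * v (k + 1) + 9 * (-1) ^ k * u (k + 1)

theorem numer_eq (h : EntryRelations u v w) (k : ℕ) :
    numer u v w k = 3 * (v (k + 1) * w (k + 2) + (-1) ^ k * w k) * u (k + 2)
      - w (k + 3) * v (k + 2) + (-1) ^ k * w (k + 1) := by
  rw [numer]
  linear_combination v (k + 2) * h.w_add_three k - 3 * v (k + 1) * h.det (k + 2)
    + 3 * v (k + 2) * h.minor_succ_uw k + 3 * (-1) ^ k * h.minor_add_two_vw k
    - 3 * v (k + 1) * neg_one_pow_sq (R := ℤ) k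

theorem numer_add_three (h : EntryRelations u v w) (k : ℕ) :
    numer u v w (k + 3) * u (k + 2) + numer u v w k * u (k + 5) + 6 * (-1) ^ k * u (k + 3)
      = 3 * (v (k + 1) * w (k + 2) + (-1) ^ k * w k) * (u (k + 2) * u (k + 5)) := by
  have hmul := h.mul_add_two_sub_mul (k + 1)
  have huv := h.minor_add_two_uv (k + 2)
  rw [h.numer_eq k, numer]
  simp only [pow_succ] at hmul huv ⊢
  linear_combination u (k + 2) * w (k + 3) * h.v_add_three (k + 2)
    + ((-1) ^ k * w (k + 1) - w (k + 3) * v (k + 2)) * h.u_add_three (k + 2)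
    + (3 * u (k + 3) * w (k + 3) + 6) * huv
    - (-1) ^ k * u (k + 2) * h.w_add_three (k + 1)
    + 3 * (-1) ^ k * w (k + 3) * h.u_mul_add_three (k + 1)
    + 3 * (-1) ^ k * u (k + 4) * hmul
    - 6 * v (k + 2) * u (k + 4) * neg_one_pow_sq (R := ℤ) k

/-- The approximation of `(-1) ^ k * w k * ξ` with denominator `u (k + 2)`. The sign makes the
increments modulo integers in `signedApprox_add_three` independent of the parity of `k`. -/
noncomputable def signedApprox (u v w : ℕ → ℤ) (k : ℕ) : ℝ :=
  (-1) ^ k * (numer u v w k / u (k + 2))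

/-- The sum of `signedApprox u v w k` and of the increments `6 * gapSeq u` along `k + 2, k + 5, …`;
modulo integers, this is the limit of `signedApprox u v w` along `k, k + 3, …`. -/
noncomputable def approxLimit (u v w : ℕ → ℤ) (k : ℕ) : ℝ :=
  signedApprox u v w k + gapSum u 6 (k + 2)

theorem signedApprox_add_three (h : EntryRelations u v w) (hg : MarkoffGrowth u) (k : ℕ) :
    ∃ z : ℤ, signedApprox u v w (k + 3) = signedApprox u v w k + 6 * gapSeq u (k + 2) + z := by
  refine ⟨-(-1) ^ k * (3 * (v (k + 1) * w (k + 2) + (-1) ^ k * w k)), ?_⟩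
  have h2 : (u (k + 2) : ℝ) ≠ 0 := hg.cast_ne_zero (k + 2)
  have h5 : (u (k + 5) : ℝ) ≠ 0 := hg.cast_ne_zero (k + 5)
  have hrec := congrArg (Int.cast : ℤ → ℝ) (h.numer_add_three k)
  push_cast at hrec
  simp only [signedApprox, gapSeq, add_assoc, Nat.reduceAdd, pow_add _ k 3]
  field_simp
  push_cast
  linear_combination -(-1) ^ k * hrec + 6 * u (k + 3) * neg_one_pow_sq (R := ℝ) k

theorem exists_approxLimit_add_mul (h : EntryRelations u v w) (hg : MarkoffGrowth u) (k i : ℕ) :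
    ∃ z : ℤ, approxLimit u v w (k + 3 * i) = approxLimit u v w k + z := by
  induction i with
  | zero => exact ⟨0, by simp⟩
  | succ i ih =>
    obtain ⟨z, hz⟩ := ih
    obtain ⟨z', hz'⟩ := h.signedApprox_add_three hg (k + 3 * i)
    refine ⟨z + z', ?_⟩
    rw [approxLimit, hg.gapSum_eq_add] at hz
    rw [mul_add_one, ← add_assoc, approxLimit, hz']
    push_cast at hz ⊢
    linear_combination hz

theorem approxLimit_eq_div_add (h : EntryRelations u v w) (hg : MarkoffGrowth u) (k : ℕ) :
    ∀ᶠ n in progression (k + 2), ∃ p : ℤ, approxLimit u v w k = p / u n + gapSum u 6 n := by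
  refine eventually_progression.2 (Eventually.of_forall fun i => ?_)
  obtain ⟨z, hz⟩ := h.exists_approxLimit_add_mul hg k i
  have hne := hg.cast_ne_zero (k + 3 * i + 2)
  rw [add_right_comm]
  refine ⟨(-1) ^ (k + 3 * i) * numer u v w (k + 3 * i) - z * u (k + 3 * i + 2), ?_⟩
  rw [eq_sub_of_add_eq hz.symm, approxLimit, signedApprox]
  push_cast
  field_simp
  ring

end EntryRelations

theorem MarkoffGrowth.exists_distInt_eq_div_add {u : ℕ → ℤ} (h : MarkoffGrowth u) {a b : ℤ}
    (ha : a ≠ 0) (hb : b ≠ 0) {n₀ : ℕ} {θ : ℝ}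
    (hθ : ∀ᶠ n in progression n₀, ∃ p : ℤ, θ = p / u n + gapSum u a n) :
    ∃ a' : ℤ, a' ≠ 0 ∧
      ∀ᶠ n in progression n₀, ∃ p : ℤ, distInt (b * θ) = p / u n + gapSum u a' n := by
  obtain ⟨ε, z, hε, hdist⟩ := exists_distInt_eq (b * θ)
  refine ⟨ε * b * a, mul_ne_zero (mul_ne_zero hε hb) ha, hθ.mono ?_⟩
  rintro n ⟨p, hp⟩
  refine ⟨ε * b * p + z * u n, ?_⟩
  have hne := h.cast_ne_zero n
  rw [hdist, hp, gapSum, gapSum]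
  push_cast
  field_simp
  ring

theorem isBigO_neg_one_pow_mul {f : ℕ → ℝ} : (fun k => (-1) ^ k * f k) =O[atTop] f :=
  IsBigO.of_bound' (Eventually.of_forall fun k => by simp)

namespace MarkoffGrowth

variable {u : ℕ → ℤ}

theorem invSeq_isBigO (h : MarkoffGrowth u) :
    invSeq u =O[atTop] fun k => (u k : ℝ) := by
  refine IsBigO.of_bound' (Eventually.of_forall fun k => ?_)
  have hone : (1 : ℝ) ≤ ‖(u k : ℝ)‖ := by
    rw [Real.norm_eq_abs]
    exact_mod_cast Int.one_le_abs (h.ne_zero k)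
  rw [invSeq, norm_inv]
  exact (inv_le_one_of_one_le₀ hone).trans hone

theorem mul_inv_add_two_isBigO (h : MarkoffGrowth u) :
    (fun k => u k * invSeq u (k + 2)) =O[atTop] invSeq u := by
  refine ((isBigO_refl (fun k => (u k : ℝ)) atTop).mul h.inv_add_two_isBigO).congr_right
    fun k => ?_
  rw [sq, ← mul_assoc, invSeq, mul_inv_cancel₀ (h.cast_ne_zero k), one_mul]

theorem succ_mul_inv_add_two_isBigO (h : MarkoffGrowth u) :
    (fun k => u (k + 1) * invSeq u (k + 2)) =O[atTop] invSeq u := by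
  refine ((isBigO_refl (invSeq u) atTop).mul h.ratioSeq_bounded).congr (fun k => ?_)
    fun k => mul_one _
  have h0 := h.cast_ne_zero k
  rw [ratioSeq, invSeq, invSeq]
  field_simp

end MarkoffGrowth

/-- The conditions that `(u k, v k)` and `(v k, w k)` provide rational approximations `v k / u k`
and `w k / v k` of `ξ` with quality `1 / u k`. -/
structure EntryApprox (ξ : ℝ) (u v w : ℕ → ℤ) : Prop where
  left : (fun k => u k * ξ - v k) =O[atTop] invSeq u
  right : (fun k => v k * ξ - w k) =O[atTop] invSeq u

namespace EntryApprox

open EntryRelations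

variable {u v w : ℕ → ℤ} {ξ : ℝ}

theorem v_isBigO (h : EntryApprox ξ u v w) (hg : MarkoffGrowth u) :
    (fun k => (v k : ℝ)) =O[atTop] fun k => (u k : ℝ) :=
  (((isBigO_refl (fun k => (u k : ℝ)) atTop).const_mul_left ξ).sub
    (h.left.trans hg.invSeq_isBigO)).congr_left fun k => by ring

theorem w_isBigO (h : EntryApprox ξ u v w) (hg : MarkoffGrowth u) :
    (fun k => (w k : ℝ)) =O[atTop] fun k => (u k : ℝ) :=
  (((h.v_isBigO hg).const_mul_left ξ).sub (h.right.trans hg.invSeq_isBigO)).congr_left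
    fun k => by ring

theorem numer_sub_isBigO (h : EntryApprox ξ u v w) (hg : MarkoffGrowth u) :
    (fun k => (numer u v w k - w k * v (k + 2) : ℝ)) =O[atTop] fun k => (u (k + 1) : ℝ) := by
  have hv := (h.v_isBigO hg).comp_tendsto (tendsto_add_atTop_nat 1)
  have hw := (h.w_isBigO hg).comp_tendsto (tendsto_add_atTop_nat 1)
  have hu : (fun k => 9 * (u (k + 1) : ℝ)) =O[atTop] fun k => (u (k + 1) : ℝ) :=
    (isBigO_refl _ _).const_mul_left 9
  refine (((isBigO_neg_one_pow_mul.trans hw).add (hv.const_mul_left 6)).add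
    (isBigO_neg_one_pow_mul.trans hu)).congr_left fun k => ?_
  rw [numer]
  push_cast [Function.comp_apply]
  ring

theorem tendsto_mul_sub_numer_div (h : EntryApprox ξ u v w) (hg : MarkoffGrowth u) :
    Tendsto (fun k => w k * ξ - numer u v w k / u (k + 2)) atTop (𝓝 0) := by
  have hs := hg.powerDecay.tendsto_zero
  have hmain : Tendsto (fun k => w k * invSeq u (k + 2) * (u (k + 2) * ξ - v (k + 2)))
      atTop (𝓝 0) := by
    have hleft := h.left.comp_tendsto (tendsto_add_atTop_nat 2)
    have hw := ((h.w_isBigO hg).mul (isBigO_refl (fun k => invSeq u (k + 2)) atTop)).trans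
      hg.mul_inv_add_two_isBigO
    simpa using (hw.trans_tendsto hs).mul (hleft.trans_tendsto (hs.comp (tendsto_add_atTop_nat 2)))
  have hrest := ((h.numer_sub_isBigO hg).mul (isBigO_refl (fun k => invSeq u (k + 2)) atTop)).trans
    hg.succ_mul_inv_add_two_isBigO |>.trans_tendsto hs
  refine ((hmain.sub hrest).congr fun k => ?_).trans_eq (by rw [sub_zero])
  have h2 := hg.cast_ne_zero (k + 2)
  rw [invSeq]
  field_simp
  ring

theorem exists_tendsto_mul_aeval_sub (h : EntryApprox ξ u v w) (hg : MarkoffGrowth u) {R : ℤ[X]}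
    (hR : R.natDegree = 3) : ∃ z : ℕ → ℤ, Tendsto (fun k => u k * aeval ξ R - z k
      - R.coeff 3 * (numer u v w k / u (k + 2))) atTop (𝓝 0) := by
  refine ⟨fun k => R.coeff 0 * u k + R.coeff 1 * v k + R.coeff 2 * w k, ?_⟩
  have hs := hg.powerDecay.tendsto_zero
  have hlim := (((h.left.trans_tendsto hs).const_mul
    (R.coeff 1 + R.coeff 2 * ξ + R.coeff 3 * ξ ^ 2 : ℝ)).add
    ((h.right.trans_tendsto hs).const_mul (R.coeff 2 + R.coeff 3 * ξ : ℝ))).add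
    ((h.tendsto_mul_sub_numer_div hg).const_mul (R.coeff 3 : ℝ))
  simp only [mul_zero, add_zero] at hlim
  refine hlim.congr fun k => ?_
  rw [aeval_eq_sum_range, hR]
  simp only [Finset.sum_range_succ, Finset.sum_range_zero, zsmul_eq_mul]
  push_cast
  ring

theorem exists_tendsto_mul_aeval_sub_approxLimit (h : EntryApprox ξ u v w) (hg : MarkoffGrowth u)
    {R : ℤ[X]} (hR : R.natDegree = 3) : ∃ z : ℕ → ℤ, Tendsto (fun k => u k * aeval ξ R - z k
      - R.coeff 3 * ((-1) ^ k * approxLimit u v w k)) atTop (𝓝 0) := by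
  obtain ⟨z, hz⟩ := h.exists_tendsto_mul_aeval_sub hg hR
  have hgap : Tendsto (fun k => (-1) ^ k * gapSum u 6 (k + 2)) atTop (𝓝 0) :=
    isBigO_neg_one_pow_mul.trans_tendsto
      ((hg.tendsto_gapSum 6).comp (tendsto_add_atTop_nat 2))
  refine ⟨z, ((hz.sub (hgap.const_mul (R.coeff 3 : ℝ))).congr fun k => ?_).trans_eq (by simp)⟩
  rw [approxLimit, signedApprox]
  linear_combination R.coeff 3 * (numer u v w k / u (k + 2)) * neg_one_pow_sq (R := ℝ) k

theorem tendsto_distInt (h : EntryApprox ξ u v w) (hrel : EntryRelations u v w)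
    (hg : MarkoffGrowth u) {R : ℤ[X]} (hR : R.natDegree = 3) (ℓ : ℕ) :
    Tendsto (fun i : ℕ => distInt (u (ℓ + 6 * i) * aeval ξ R)) atTop
      (𝓝 (distInt ((R.coeff 3 * (-1) ^ ℓ : ℤ) * approxLimit u v w ℓ))) := by
  obtain ⟨z, hz⟩ := h.exists_tendsto_mul_aeval_sub_approxLimit hg hR
  choose y hy using fun i => hrel.exists_approxLimit_add_mul hg ℓ (2 * i)
  have hlim := (hz.comp (tendsto_add_mul_atTop ℓ (by decide : 6 ≠ 0))).add_const
    (((R.coeff 3 * (-1) ^ ℓ : ℤ) : ℝ) * approxLimit u v w ℓ)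
  rw [zero_add] at hlim
  refine ((continuous_distInt.tendsto _).comp hlim).congr fun i => ?_
  have hyi : approxLimit u v w (ℓ + 6 * i) = approxLimit u v w ℓ + y i := by
    simpa only [← mul_assoc, Nat.reduceMul] using hy i
  have hsign : (-1 : ℝ) ^ (ℓ + 6 * i) = (-1) ^ ℓ := by
    rw [pow_add, ((by decide : Even 6).mul_right i).neg_one_pow, mul_one]
  rw [← distInt_add_intCast (u (ℓ + 6 * i) * aeval ξ R)
    (-z (ℓ + 6 * i) - R.coeff 3 * (-1) ^ ℓ * y i)]
  simp only [Function.comp_apply, hsign, hyi]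
  congr 1
  push_cast
  ring

end EntryApprox

namespace MarkoffSeq

variable {ξ : ℝ} {x : ℕ → Matrix (Fin 2) (Fin 2) ℤ}

/-- The sequence of `(i, j)` entries of `x`, shifted by `6`: since the hypotheses say nothing about
`x 0`, indices start later, and a shift by `6` preserves their residues modulo `6`. -/
def entry (x : ℕ → Matrix (Fin 2) (Fin 2) ℤ) (i j : Fin 2) (k : ℕ) : ℤ := x (k + 6) i j

theorem entry_symm (hx : MarkoffSeq ξ x) (k : ℕ) : entry x 1 0 k = entry x 0 1 k :=
  (hx.1 (k + 6) (Nat.le_add_left _ _)).symm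

theorem entry_add_two (hx : MarkoffSeq ξ x) (k : ℕ) (i j : Fin 2) : entry x i j (k + 2) =
    (3 * entry x i 0 (k + 1) + (-1) ^ k * entry x i 1 (k + 1)) * entry x 0 j k
      - (-1) ^ k * entry x i 0 (k + 1) * entry x 1 j k := by
  obtain ⟨-, -, c₁, c₂, c₃, -, -, -, hk⟩ := hx
  have hmul : x (k + 2 + 6) = x (k + 1 + 6) * Mmat (k + 1 + 6) * x (k + 6) :=
    (hk (k + 6) (by omega)).2.2.1.1
  have hM : Mmat (k + 1 + 6) = !![3, -(-1) ^ k; (-1) ^ k, 0] := by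
    rw [Mmat]
    ring_nf
  simp only [entry, hmul, hM, Matrix.mul_apply, Fin.sum_univ_two, Matrix.of_apply,
    Matrix.cons_val', Matrix.cons_val_zero, Matrix.cons_val_one, Matrix.cons_val_fin_one]
  ring

theorem entryRelations (hx : MarkoffSeq ξ x) :
    EntryRelations (entry x 0 0) (entry x 0 1) (entry x 1 1) where
  det k := by
    have hdet : (x (k + 6)).det = 1 := hx.2.1 (k + 6) (Nat.le_add_left _ _)
    rw [Matrix.det_fin_two] at hdet
    change entry x 0 0 k * entry x 1 1 k - entry x 0 1 k * entry x 1 0 k = 1 at hdet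
    rw [hx.entry_symm] at hdet
    linear_combination hdet
  u_left k := by
    rw [hx.entry_add_two, hx.entry_symm]
    ring
  v_left k := by
    rw [hx.entry_add_two]
    ring
  v_left' k := by
    rw [← hx.entry_symm (k + 2), hx.entry_add_two, hx.entry_symm, hx.entry_symm]
    ring
  w_left k := by
    rw [hx.entry_add_two, hx.entry_symm]
    ring

theorem abs_entry_le_Xnorm (k : ℕ) : |(entry x 0 0 k : ℝ)| ≤ Xnorm x (k + 6) := le_max_left _ _

theorem Xnorm_lt (hx : MarkoffSeq ξ x) (k : ℕ) :
    Xnorm x (k + 6) < (1 + ξ ^ 2) * |(entry x 0 0 k : ℝ)| := by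
  obtain ⟨-, -, c₁, c₂, c₃, -, -, -, hk⟩ := hx
  exact (hk (k + 6) (Nat.le_add_left _ _)).2.2.2.2

theorem abs_entry_pos (hx : MarkoffSeq ξ x) (k : ℕ) : 0 < |(entry x 0 0 k : ℝ)| :=
  pos_of_mul_pos_right (((abs_nonneg _).trans (abs_entry_le_Xnorm k)).trans_lt (hx.Xnorm_lt k))
    (by positivity)

theorem natCast_le_Xnorm (hx : MarkoffSeq ξ x) (k : ℕ) : (k : ℝ) ≤ Xnorm x (k + 1) := by
  obtain ⟨-, -, c₁, c₂, c₃, -, -, -, hk⟩ := hx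
  have hint (n : ℕ) : Xnorm x n = (max |x n 0 0| (max |x n 0 1| |x n 1 1|) : ℤ) := by
    rw [Xnorm]
    push_cast
    rfl
  induction k with
  | zero => exact_mod_cast (abs_nonneg _).trans (le_max_left _ _)
  | succ k ih =>
    have hlt := (hk (k + 1) (Nat.le_add_left _ _)).2.2.2.1
    rw [hint, hint, Int.cast_lt] at hlt
    rw [hint, ← Int.cast_natCast, Int.cast_le] at ih
    rw [hint, ← Int.cast_natCast, Int.cast_le, Nat.cast_succ]
    exact Int.add_one_le_of_lt (ih.trans_lt hlt)

theorem Xnorm_isTheta (hx : MarkoffSeq ξ x) :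
    (fun k => Xnorm x (k + 6)) =Θ[atTop] fun k => (entry x 0 0 k : ℝ) := by
  have hnonneg (k : ℕ) : 0 ≤ Xnorm x (k + 6) := (abs_nonneg _).trans (abs_entry_le_Xnorm k)
  refine ⟨IsBigO.of_bound (1 + ξ ^ 2) (Eventually.of_forall fun k => ?_),
    IsBigO.of_bound' (Eventually.of_forall fun k => ?_)⟩
  · rw [Real.norm_of_nonneg (hnonneg k)]
    exact (hx.Xnorm_lt k).le
  · rw [Real.norm_of_nonneg (hnonneg k)]
    exact abs_entry_le_Xnorm k

theorem Xnorm_succ_isTheta (hx : MarkoffSeq ξ x) :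
    (fun k => Xnorm x (k + 7)) =Θ[atTop] fun k => Xnorm x (k + 6) ^ gold := by
  obtain ⟨-, -, c₁, c₂, c₃, hc₁, -, -, hk⟩ := hx
  have hpos (k : ℕ) : 0 ≤ Xnorm x k := (abs_nonneg _).trans (le_max_left _ _)
  have hbound (k : ℕ) := (hk (k + 6) (Nat.le_add_left _ _)).1
  refine ⟨IsBigO.of_bound c₂ (Eventually.of_forall fun k => ?_),
    IsBigO.of_bound c₁⁻¹ (Eventually.of_forall fun k => ?_)⟩
  · rw [Real.norm_of_nonneg (hpos _), Real.norm_of_nonneg (Real.rpow_nonneg (hpos _) _)]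
    exact (hbound k).2
  · rw [Real.norm_of_nonneg (hpos _), Real.norm_of_nonneg (Real.rpow_nonneg (hpos _) _),
      le_inv_mul_iff₀ hc₁]
    exact (hbound k).1

theorem tendsto_Xnorm (hx : MarkoffSeq ξ x) :
    Tendsto (fun k => Xnorm x (k + 6)) atTop atTop :=
  (tendsto_atTop_mono hx.natCast_le_Xnorm tendsto_natCast_atTop_atTop).comp
    (tendsto_add_atTop_nat 5)

theorem powerDecay (hx : MarkoffSeq ξ x) : PowerDecay gold (invSeq (entry x 0 0)) where
  ne_zero k := inv_ne_zero (abs_pos.1 (hx.abs_entry_pos k))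
  tendsto_zero := hx.Xnorm_isTheta.symm.inv.isBigO.trans_tendsto
    (tendsto_inv_atTop_zero.comp hx.tendsto_Xnorm)
  succ_isTheta := by
    have hsucc : (fun k => (entry x 0 0 (k + 1) : ℝ)) =Θ[atTop] fun k => Xnorm x (k + 7) :=
      hx.Xnorm_isTheta.symm.imp (·.comp_tendsto (tendsto_add_atTop_nat 1))
        (·.comp_tendsto (tendsto_add_atTop_nat 1))
    have hpow : (fun k => Xnorm x (k + 6) ^ gold) =Θ[atTop]
        fun k => |(entry x 0 0 k : ℝ)| ^ gold :=
      IsTheta.rpow (hx.tendsto_Xnorm.eventually_ge_atTop 0)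
        (Eventually.of_forall fun _ => abs_nonneg _) hx.Xnorm_isTheta.norm_right
    refine (hsucc.trans (hx.Xnorm_succ_isTheta.trans hpow)).inv.trans_eventuallyEq
      (Eventually.of_forall fun k => ?_)
    simp only [invSeq, abs_inv, Real.inv_rpow (abs_nonneg _)]

theorem markoffGrowth (hx : MarkoffSeq ξ x) : MarkoffGrowth (entry x 0 0) :=
  ⟨hx.entryRelations.markoff, hx.powerDecay⟩

theorem entryApprox (hx : MarkoffSeq ξ x) :
    EntryApprox ξ (entry x 0 0) (entry x 0 1) (entry x 1 1) := by
  have hpos := hx.abs_entry_pos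
  obtain ⟨-, -, c₁, c₂, c₃, -, -, hc₃, hk⟩ := hx
  have hdiv (k : ℕ) : c₃ / Xnorm x (k + 6) ≤ c₃ * ‖invSeq (entry x 0 0) k‖ := by
    rw [invSeq, norm_inv, ← div_eq_mul_inv]
    exact div_le_div_of_nonneg_left hc₃.le (hpos k) (abs_entry_le_Xnorm k)
  have happrox (k : ℕ) := (hk (k + 6) (Nat.le_add_left _ _)).2.1
  exact ⟨IsBigO.of_bound c₃ (Eventually.of_forall fun k => (happrox k).1.trans (hdiv k)),
    IsBigO.of_bound c₃ (Eventually.of_forall fun k => (happrox k).2.trans (hdiv k))⟩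

end MarkoffSeq

theorem stmt13_general (ξ : ℝ) (x : ℕ → Matrix (Fin 2) (Fin 2) ℤ) (hx : MarkoffSeq ξ x)
    (ℓ : ℕ) (R : Polynomial ℤ) (hR : R.natDegree = 3) :
    ∃ δ : ℝ,
      Tendsto (fun i : ℕ =>
        distInt ((x (ℓ+6*i) 0 0 : ℝ) * Polynomial.aeval ξ R)) atTop (nhds δ) ∧
      Transcendental ℚ δ ∧
      (∃ c₄ : ℝ, 0 < c₄ ∧
        {α : ℚ | |δ - (α : ℝ)| ≤ c₄ * ratHeight α ^ (-gold - 2)}.Infinite) ∧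
      (∃ c₅ : ℝ, 0 < c₅ ∧
        ∀ α : ℚ, ¬ (|δ - (α : ℝ)| ≤ c₅ * ratHeight α ^ (-gold - 2))) := by
  have hgrowth := hx.markoffGrowth
  have hlead : R.coeff 3 * (-1) ^ ℓ ≠ 0 := by
    rw [← hR]
    refine mul_ne_zero (leadingCoeff_ne_zero.2 fun h0 => ?_) (pow_ne_zero _ (by decide))
    simp [h0] at hR
  have hlim := hx.entryApprox.tendsto_distInt hx.entryRelations hgrowth hR ℓ
  obtain ⟨a, ha, happrox⟩ := hgrowth.exists_distInt_eq_div_add (by decide : (6 : ℤ) ≠ 0) hlead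
    (hx.entryRelations.approxLimit_eq_div_add hgrowth ℓ)
  have htrans := hgrowth.transcendental_of_approx ha happrox
  exact ⟨_, (tendsto_add_atTop_iff_nat 1).1 hlim, htrans,
    hgrowth.exists_infinite_approx htrans.irrational happrox,
    hgrowth.exists_lower_approx ha happrox⟩

theorem stmt13 (ξ : ℝ) (x : ℕ → Matrix (Fin 2) (Fin 2) ℤ) (hx : MarkoffSeq ξ x)
    (ℓ : ℕ) (hℓ : ℓ ∈ ({1, 2, 3} : Set ℕ)) (R : Polynomial ℤ) (hR : R.natDegree = 3) :
    ∃ δ : ℝ,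
      Tendsto (fun i : ℕ =>
        distInt ((x (ℓ+6*i) 0 0 : ℝ) * Polynomial.aeval ξ R)) atTop (nhds δ) ∧
      Transcendental ℚ δ ∧
      (∃ c₄ : ℝ, 0 < c₄ ∧
        {α : ℚ | |δ - (α : ℝ)| ≤ c₄ * ratHeight α ^ (-gold - 2)}.Infinite) ∧
      (∃ c₅ : ℝ, 0 < c₅ ∧
        ∀ α : ℚ, ¬ (|δ - (α : ℝ)| ≤ c₅ * ratHeight α ^ (-gold - 2))) :=
  stmt13_general ξ x hx ℓ R hR
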